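/- arXiv:2107.07800 — 2 statements merged into one kernel-verified Lean document; each statement's English description precedes it below -/
import Mathlib

section
/- Assume the instance is feasible on m machines and let q > 0. Then there exists a feasible m-machine solution whose energy is at most 3·(S* + P), where S* is the minimum cost of an m-machine skeleton and P = Σ_i p_i. Since S* is at most the minimum energy OPT of a feasible solution and P ≤ OPT, it follows that there is a feasible solution of energy at most 6·OPT. -/
open scoped Classical

/-- A job with release time `r`, deadline `d`, and processing requirement `p`. -/
structure Job where
  r : ℕ
  d : ℕ
  p : ℕ

/-- A valid job: `p ≥ 1` and `r + p ≤ d`. -/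
def Job.Valid (j : Job) : Prop := 1 ≤ j.p ∧ j.r + j.p ≤ j.d

/-- Number of maximal runs of consecutive slots of `A` (counted by left endpoints). -/
noncomputable def runs (A : Finset ℕ) : ℕ :=
  (A.filter (fun t => ∀ s ∈ A, s + 1 ≠ t)).card

/-- `cost q A = |A| + q · c(A)` for wake-up cost `q`. -/
noncomputable def cost (q : ℝ) (A : Finset ℕ) : ℝ := (A.card : ℝ) + q * (runs A : ℝ)

/-- A feasible single-processor solution: active slots `A` and schedule `σ` assigning to
each slot at most one job, each job `i` scheduled in exactly `pᵢ` slots `t` with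
`rᵢ ≤ t ≤ dᵢ − 1`, all within `A`. -/
def Feasible {n : ℕ} (jobs : Fin n → Job) (A : Finset ℕ) (σ : ℕ → Option (Fin n)) : Prop :=
  (∀ t : ℕ, (σ t).isSome → t ∈ A) ∧
  (∀ (i : Fin n) (t : ℕ), σ t = some i → (jobs i).r ≤ t ∧ t + 1 ≤ (jobs i).d) ∧
  (∀ i : Fin n, (A.filter (fun t => σ t = some i)).card = (jobs i).p)

/-- A skeleton: for every job `i` there is an active slot `t ∈ B` with
`rᵢ − 1 ≤ t ≤ dᵢ`, i.e. an active slot overlapping the span `[rᵢ, dᵢ]`. -/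
def Skeleton {n : ℕ} (jobs : Fin n → Job) (B : Finset ℕ) : Prop :=
  ∀ i : Fin n, ∃ t ∈ B, (jobs i).r ≤ t + 1 ∧ t ≤ (jobs i).d

/-- A feasible `m`-machine solution: active slot sets `A k` and a schedule `σ` assigning
jobs to (machine, slot) pairs with `t ∈ A k`, each job `i` assigned exactly `pᵢ` pairs,
all with `rᵢ ≤ t ≤ dᵢ − 1`, no two jobs sharing a pair, and no job on two machines in the
same slot. -/
def MFeasible {n m : ℕ} (jobs : Fin n → Job) (A : Fin m → Finset ℕ)
    (σ : Fin m → ℕ → Option (Fin n)) : Prop :=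
  (∀ (k : Fin m) (t : ℕ), (σ k t).isSome → t ∈ A k) ∧
  (∀ (k : Fin m) (t : ℕ) (i : Fin n), σ k t = some i →
    (jobs i).r ≤ t ∧ t + 1 ≤ (jobs i).d) ∧
  (∀ (k k' : Fin m) (t : ℕ) (i : Fin n), σ k t = some i → σ k' t = some i → k = k') ∧
  (∀ i : Fin n, (∑ k : Fin m, ((A k).filter (fun t => σ k t = some i)).card) = (jobs i).p)

/-- Energy of an `m`-machine solution with active sets `A`. -/
noncomputable def energy {m : ℕ} (q : ℝ) (A : Fin m → Finset ℕ) : ℝ :=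
  ∑ k : Fin m, cost q (A k)

/-- Number of machines active at slot `t`. -/
noncomputable def activeCount {m : ℕ} (A : Fin m → Finset ℕ) (t : ℕ) : ℕ :=
  (Finset.univ.filter (fun k : Fin m => t ∈ A k)).card

/-- `BlackoutFeasible n m jobs a b ℓ`: `ℓ ≤ m` and there is a feasible `m`-machine solution
in which at most `m − ℓ` machines are active at every slot `t` with `a ≤ t ≤ b − 1`.
`l a b` is the greatest such `ℓ`. -/
def BlackoutFeasible (n m : ℕ) (jobs : Fin n → Job) (a b ℓ : ℕ) : Prop :=
  ℓ ≤ m ∧ ∃ (A : Fin m → Finset ℕ) (σ : Fin m → ℕ → Option (Fin n)),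
    MFeasible jobs A σ ∧ ∀ t : ℕ, a ≤ t → t < b → activeCount A t ≤ m - ℓ

/-- An `m`-machine skeleton: for all `a < b` there is a slot `t` with `a ≤ t ≤ b − 1` at
which at least `m − l(a,b)` machines are active. -/
def MSkeleton {n : ℕ} (m : ℕ) (jobs : Fin n → Job) (l : ℕ → ℕ → ℕ)
    (B : Fin m → Finset ℕ) : Prop :=
  ∀ a b : ℕ, a < b → ∃ t : ℕ, a ≤ t ∧ t < b ∧ m - l a b ≤ activeCount B t

namespace Skel

/-- Slots in which a job may run. -/
def span (j : Job) : Finset ℕ := Finset.Ico j.r j.d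

/-- Work of a job that is forced into the slot set `Y`. -/
noncomputable def forced (j : Job) (Y : Finset ℕ) : ℕ := j.p - (span j \ Y).card

/-- Total work forced into `Y`. -/
noncomputable def tot {n : ℕ} (jobs : Fin n → Job) (Y : Finset ℕ) : ℕ := ∑ i, forced (jobs i) Y

lemma forced_supermod (j : Job) (Y Z : Finset ℕ) :
    forced j Y + forced j Z ≤ forced j (Y ∪ Z) + forced j (Y ∩ Z) := by
  unfold forced
  have h1 : span j \ (Y ∪ Z) = (span j \ Y) ∩ (span j \ Z) := by ext; simp; tauto
  have h2 : span j \ (Y ∩ Z) = (span j \ Y) ∪ (span j \ Z) := by ext; simp; tauto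
  have h3 := Finset.card_union_add_card_inter (span j \ Y) (span j \ Z)
  have h4 := Finset.card_le_card (Finset.inter_subset_left (s₁ := span j \ Y) (s₂ := span j \ Z))
  have h5 := Finset.card_le_card (Finset.inter_subset_right (s₁ := span j \ Y) (s₂ := span j \ Z))
  rw [h1, h2]
  omega

lemma tot_supermod {n : ℕ} (jobs : Fin n → Job) (Y Z : Finset ℕ) :
    tot jobs Y + tot jobs Z ≤ tot jobs (Y ∪ Z) + tot jobs (Y ∩ Z) := by
  unfold tot
  rw [← Finset.sum_add_distrib, ← Finset.sum_add_distrib]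
  exact Finset.sum_le_sum fun i _ => forced_supermod _ _ _

lemma forced_mono (j : Job) {Y Z : Finset ℕ} (h : Y ⊆ Z) : forced j Y ≤ forced j Z := by
  unfold forced
  have := Finset.card_le_card (Finset.sdiff_subset_sdiff (le_refl (span j)) h)
  omega

/-- Removing an interval from `Y`. -/
lemma forced_remove (j : Job) (Y Y0 : Finset ℕ) (hY : Y ⊆ Y0) (a b : ℕ) (hab : a < b) :
    forced j Y ≤ forced j (Y \ Finset.Ico a b) + forced j (Y ∩ Finset.Ico a b)
      + (Y ∩ Finset.Ico a b).card *
        ((if 0 < a ∧ a - 1 ∈ span j ∧ 0 < forced j Y0 then 1 else 0)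
          + (if b ∈ span j ∧ 0 < forced j Y0 then 1 else 0)) := by
  by_cases h0 : forced j Y = 0
  · omega
  have hpos : 0 < forced j Y0 := lt_of_lt_of_le (Nat.pos_of_ne_zero h0) (forced_mono j hY)
  have key : forced j Y ≤ forced j (Y \ Finset.Ico a b) + (Y ∩ Finset.Ico a b).card := by
    unfold forced
    have h1 : span j \ (Y \ Finset.Ico a b) ⊆ (span j \ Y) ∪ (Y ∩ Finset.Ico a b) := by
      intro x; simp; tauto
    have h2 := (Finset.card_le_card h1).trans (Finset.card_union_le _ _)
    omega
  by_cases h1 : 0 < a ∧ a - 1 ∈ span j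
  · rw [if_pos (show 0 < a ∧ a - 1 ∈ span j ∧ 0 < forced j Y0 from ⟨h1.1, h1.2, hpos⟩)]
    split_ifs <;> omega
  by_cases h2 : b ∈ span j
  · rw [if_pos (show b ∈ span j ∧ 0 < forced j Y0 from ⟨h2, hpos⟩)]
    split_ifs <;> omega
  simp only [span, Finset.mem_Ico] at h1 h2
  by_cases h3 : j.r < b ∧ a < j.d
  · have : span j \ (Y ∩ Finset.Ico a b) = span j \ Y := by
      ext x
      simp only [span, Finset.mem_sdiff, Finset.mem_Ico, Finset.mem_inter]
      constructor
      · rintro ⟨h, h'⟩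
        refine ⟨h, fun hx => h' ⟨hx, ?_⟩⟩
        omega
      · tauto
    have : forced j (Y ∩ Finset.Ico a b) = forced j Y := by unfold forced; rw [this]
    omega
  · have : span j \ (Y \ Finset.Ico a b) = span j \ Y := by
      ext x
      simp only [span, Finset.mem_sdiff, Finset.mem_Ico]
      constructor
      · rintro ⟨h, h'⟩
        refine ⟨h, fun hx => h' ⟨hx, ?_⟩⟩
        omega
      · tauto
    have : forced j (Y \ Finset.Ico a b) = forced j Y := by unfold forced; rw [this]
    omega

lemma forced_insert (j : Job) (Y : Finset ℕ) (s : ℕ) (hs : s ∉ Y) :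
    forced j Y + (if s ∈ span j ∧ 0 < forced j Y then 1 else 0) ≤ forced j (insert s Y) := by
  split_ifs with h
  · obtain ⟨h1, h2⟩ := h
    unfold forced at *
    have h3 : span j \ insert s Y = (span j \ Y).erase s := by
      ext; simp; tauto
    have h4 : s ∈ span j \ Y := by simp [h1, hs]
    have := Finset.card_erase_add_one h4
    rw [h3]
    omega
  · exact forced_mono j (Finset.subset_insert _ _)

lemma exists_component (Y0 : Finset ℕ) (t : ℕ) (ht : t ∈ Y0) :
    ∃ a b, a ≤ t ∧ t < b ∧ Finset.Ico a b ⊆ Y0 ∧ b ∉ Y0 ∧ (0 < a → a - 1 ∉ Y0) := by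
  have hb : ∃ x, t < x ∧ x ∉ Y0 := by
    obtain ⟨x, hx⟩ := Infinite.exists_notMem_finset (Y0 ∪ Finset.range (t + 1))
    simp at hx
    exact ⟨x, by omega, hx.1⟩
  have ha : ∃ a, a ≤ t ∧ Finset.Icc a t ⊆ Y0 := ⟨t, le_refl _, by simpa using ht⟩
  refine ⟨Nat.find ha, Nat.find hb, (Nat.find_spec ha).1, (Nat.find_spec hb).1, ?_,
    (Nat.find_spec hb).2, ?_⟩
  · intro x hx
    rw [Finset.mem_Ico] at hx
    by_cases h : x ≤ t
    · exact (Nat.find_spec ha).2 (Finset.mem_Icc.2 ⟨hx.1, h⟩)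
    · have := Nat.find_min hb hx.2
      by_contra h'
      exact this ⟨by omega, h'⟩
  · intro h h'
    refine Nat.find_min ha (m := Nat.find ha - 1) (by omega) ⟨?_, ?_⟩
    · have := (Nat.find_spec ha).1; omega
    · intro x hx
      rw [Finset.mem_Icc] at hx
      by_cases h2 : x = Nat.find ha - 1
      · rw [h2]; exact h'
      · exact (Nat.find_spec ha).2 (Finset.mem_Icc.2 ⟨by omega, hx.2⟩)

/-- The combinatorial core: a stuck profile becomes feasible after tripling. -/
lemma core {n : ℕ} (jobs : Fin n → Job) (m T : ℕ) (hd : ∀ i, (jobs i).d ≤ T)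
    (w : ℕ → ℕ) (hw : ∀ t, w t ≤ m) (d : ℕ) (Y0 : Finset ℕ) (hY0 : Y0 ⊆ Finset.range T)
    (hmax : ∀ Z ⊆ Finset.range T, tot jobs Z ≤ (∑ t ∈ Z, w t) + d)
    (htight : tot jobs Y0 = (∑ t ∈ Y0, w t) + d)
    (hloc : ∀ t ∈ Y0, w (t + 1) ≤ w t) (hloc' : ∀ t, t + 1 ∈ Y0 → w t ≤ w (t + 1))
    (hm : ∀ Z, tot jobs Z ≤ Z.card * m)
    (hsk : ∀ a b c, a < b → (∀ t ∈ Finset.Ico a b, w t = c) →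
      ∀ Z ⊆ Finset.Ico a b, tot jobs Z ≤ Z.card * c) :
    ∀ Y ⊆ Finset.range T, tot jobs Y ≤ ∑ t ∈ Y, min m (3 * w t) := by
  have hN : ∀ s, s ∉ Y0 →
      (∑ i, if s ∈ span (jobs i) ∧ 0 < forced (jobs i) Y0 then 1 else 0) ≤ w s := by
    intro s hs
    by_cases hsT : s < T
    · have h1 := hmax (insert s Y0)
        (Finset.insert_subset (Finset.mem_range.2 hsT) hY0)
      rw [Finset.sum_insert hs] at h1
      have h2 : tot jobs Y0 + (∑ i, if s ∈ span (jobs i) ∧ 0 < forced (jobs i) Y0 then 1 else 0)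
          ≤ tot jobs (insert s Y0) := by
        unfold tot
        rw [← Finset.sum_add_distrib]
        exact Finset.sum_le_sum fun i _ => forced_insert _ _ _ hs
      omega
    · rw [Finset.sum_eq_zero]
      · omega
      · intro i _
        rw [if_neg]
        rintro ⟨h, -⟩
        simp only [span, Finset.mem_Ico] at h
        have := hd i
        omega
  have hsub : ∀ N, ∀ Y ⊆ Y0, Y.card ≤ N → tot jobs Y ≤ ∑ t ∈ Y, min m (3 * w t) := by
    intro N
    induction N with
    | zero =>
      intro Y _ hc
      have := hm Y
      have h0 : Y.card = 0 := by omega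
      rw [h0] at this
      omega
    | succ N ih =>
      intro Y hY hc
      by_cases hall : ∀ t ∈ Y, m ≤ 3 * w t
      · rw [Finset.sum_congr rfl (fun t ht => min_eq_left (hall t ht))]
        simpa using hm Y
      push Not at hall
      obtain ⟨t, htY, ht⟩ := hall
      obtain ⟨a, b, hat, htb, hI, hbn, han⟩ := exists_component Y0 t (hY htY)
      have hconst0 : ∀ s, a ≤ s → s < b → w s = w a := by
        intro s hs
        induction s, hs using Nat.le_induction with
        | base => intro _; rfl
        | succ s hs ih2 =>
          intro hsb
          have e := ih2 (by omega)
          have h1 := hloc s (hI (Finset.mem_Ico.2 ⟨hs, by omega⟩))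
          have h2 := hloc' s (hI (Finset.mem_Ico.2 ⟨by omega, hsb⟩))
          omega
      have hta := hconst0 t hat htb
      have hconst : ∀ s ∈ Finset.Ico a b, w s = w t := by
        intro s hs
        rw [Finset.mem_Ico] at hs
        rw [hconst0 s hs.1 hs.2, hta]
      have hab : a < b := by omega
      have e1 := hsk a b (w t) hab hconst (Y ∩ Finset.Ico a b) Finset.inter_subset_right
      have e2 : (∑ i, if 0 < a ∧ a - 1 ∈ span (jobs i) ∧ 0 < forced (jobs i) Y0 then 1 else 0)
          ≤ w t := by
        by_cases h : 0 < a
        · have h1 := hN (a - 1) (han h)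
          have h2 := hloc' (a - 1) (by
            rw [Nat.sub_add_cancel h]; exact hI (Finset.mem_Ico.2 ⟨le_refl _, hab⟩))
          rw [Nat.sub_add_cancel h] at h2
          simp only [h, true_and]
          omega
        · simp [h]
      have e3 : (∑ i, if b ∈ span (jobs i) ∧ 0 < forced (jobs i) Y0 then 1 else 0) ≤ w t := by
        have h1 := hN b hbn
        have h2 := hloc (b - 1) (hI (Finset.mem_Ico.2 ⟨by omega, by omega⟩))
        rw [Nat.sub_add_cancel (by omega : 1 ≤ b),
          hconst (b - 1) (Finset.mem_Ico.2 ⟨by omega, by omega⟩)] at h2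
        omega
      have e4 : tot jobs Y ≤ tot jobs (Y \ Finset.Ico a b) + tot jobs (Y ∩ Finset.Ico a b)
          + (Y ∩ Finset.Ico a b).card *
          ((∑ i, if 0 < a ∧ a - 1 ∈ span (jobs i) ∧ 0 < forced (jobs i) Y0 then 1 else 0)
            + (∑ i, if b ∈ span (jobs i) ∧ 0 < forced (jobs i) Y0 then 1 else 0)) := by
        unfold tot
        rw [← Finset.sum_add_distrib, ← Finset.sum_add_distrib, Finset.mul_sum,
          ← Finset.sum_add_distrib]
        exact Finset.sum_le_sum fun i _ => forced_remove _ _ _ hY _ _ hab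
      have e5 : tot jobs (Y \ Finset.Ico a b) ≤ ∑ t ∈ Y \ Finset.Ico a b, min m (3 * w t) := by
        apply ih _ (Finset.sdiff_subset.trans hY)
        have : Y \ Finset.Ico a b ⊂ Y := by
          refine Finset.ssubset_iff_subset_ne.2 ⟨Finset.sdiff_subset, fun h => ?_⟩
          rw [← h] at htY
          simp at htY
          omega
        have := Finset.card_lt_card this
        omega
      have e6 : ∑ s ∈ Y ∩ Finset.Ico a b, min m (3 * w s)
          = (Y ∩ Finset.Ico a b).card * (3 * w t) := by
        rw [Finset.sum_congr rfl (g := fun _ => 3 * w t)]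
        · simp
        · intro s hs
          rw [hconst s (Finset.mem_inter.1 hs).2]
          omega
      have e7 := Finset.sum_inter_add_sum_sdiff Y (Finset.Ico a b) (fun t => min m (3 * w t))
      have e8 := Nat.mul_le_mul_left (Y ∩ Finset.Ico a b).card (Nat.add_le_add e2 e3)
      nlinarith
  intro Y hY
  have h1 := tot_supermod jobs Y Y0
  have h2 := hmax (Y ∪ Y0) (Finset.union_subset hY hY0)
  have h3 := hsub _ (Y ∩ Y0) Finset.inter_subset_right le_rfl
  have h4 := Finset.sum_inter_add_sum_sdiff Y Y0 (fun t => min m (3 * w t))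
  have h5 : ∑ t ∈ Y ∪ Y0, w t = ∑ t ∈ Y \ Y0, w t + ∑ t ∈ Y0, w t := by
    rw [← Finset.sum_union Finset.sdiff_disjoint, Finset.sdiff_union_self_eq_union]
  have h6 : ∑ t ∈ Y \ Y0, w t ≤ ∑ t ∈ Y \ Y0, min m (3 * w t) :=
    Finset.sum_le_sum fun t _ => le_min (hw t) (by omega)
  omega

/-- Necessity of the cut condition. -/
lemma tot_le_of_feasible {n m : ℕ} {jobs : Fin n → Job} {A : Fin m → Finset ℕ}
    {σ : Fin m → ℕ → Option (Fin n)} (h : MFeasible jobs A σ) (Y : Finset ℕ) :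
    tot jobs Y ≤ ∑ t ∈ Y, activeCount A t := by
  obtain ⟨h1, h2, h3, h4⟩ := h
  -- pairs used by job i within Y
  have hi : ∀ i, forced (jobs i) Y ≤
      ∑ k : Fin m, ((A k).filter (fun t => σ k t = some i ∧ t ∈ Y)).card := by
    intro i
    have hout : ∑ k : Fin m, ((A k).filter (fun t => σ k t = some i ∧ t ∉ Y)).card
        ≤ (span (jobs i) \ Y).card := by
      rw [← Finset.card_biUnion]
      · apply Finset.card_le_card
        intro t ht
        simp only [Finset.mem_biUnion, Finset.mem_filter, Finset.mem_univ, true_and] at ht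
        obtain ⟨k, _, hk, hY⟩ := ht
        have := h2 k t i hk
        simp only [span, Finset.mem_sdiff, Finset.mem_Ico]
        exact ⟨⟨this.1, by omega⟩, hY⟩
      · intro k _ k' _ hne
        rw [Function.onFun, Finset.disjoint_left]
        intro t ht ht'
        simp only [Finset.mem_filter] at ht ht'
        exact hne (h3 k k' t i ht.2.1 ht'.2.1)
    have hsplit : (jobs i).p = ∑ k : Fin m, ((A k).filter (fun t => σ k t = some i ∧ t ∈ Y)).card
        + ∑ k : Fin m, ((A k).filter (fun t => σ k t = some i ∧ t ∉ Y)).card := by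
      rw [← h4 i, ← Finset.sum_add_distrib]
      refine Finset.sum_congr rfl fun k _ => ?_
      rw [← Finset.filter_filter, ← Finset.filter_filter, Finset.card_filter_add_card_filter_not]
    unfold forced
    omega
  calc tot jobs Y ≤ ∑ i, ∑ k : Fin m, ((A k).filter (fun t => σ k t = some i ∧ t ∈ Y)).card :=
        Finset.sum_le_sum fun i _ => hi i
    _ = ∑ k : Fin m, ∑ i, ((A k).filter (fun t => σ k t = some i ∧ t ∈ Y)).card :=
        Finset.sum_comm
    _ ≤ ∑ k : Fin m, (Y.filter (fun t => t ∈ A k)).card := by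
        refine Finset.sum_le_sum fun k _ => ?_
        rw [← Finset.card_biUnion]
        · apply Finset.card_le_card
          intro t ht
          simp only [Finset.mem_biUnion, Finset.mem_filter, Finset.mem_univ, true_and] at ht ⊢
          obtain ⟨i, h, _, h'⟩ := ht
          exact ⟨h', h⟩
        · intro i _ i' _ hne
          rw [Function.onFun, Finset.disjoint_left]
          intro t ht ht'
          simp only [Finset.mem_filter] at ht ht'
          have := ht.2.1.symm.trans ht'.2.1
          exact hne (Option.some.inj this)
    _ = ∑ t ∈ Y, activeCount A t := by
        unfold activeCount
        simp only [Finset.card_filter]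
        exact Finset.sum_comm

/-- Sufficiency of the cut condition (via Hall's theorem). -/
lemma feasible_of_tot {n m : ℕ} {jobs : Fin n → Job} (hval : ∀ i, (jobs i).Valid) (T : ℕ)
    (hd : ∀ i, (jobs i).d ≤ T) (A : Fin m → Finset ℕ)
    (h : ∀ Y ⊆ Finset.range T, tot jobs Y ≤ ∑ t ∈ Y, activeCount A t) :
    ∃ σ : Fin m → ℕ → Option (Fin n), MFeasible jobs A σ := by
  let ι := {x : Fin n × ℕ // x.2 ∈ span (jobs x.1)}
  let slotN : ℕ → Finset (Fin m × ℕ) := fun t =>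
    (Finset.univ.filter (fun k : Fin m => t ∈ A k)) ×ˢ {t}
  let idleN : Fin n → Finset (Fin n × ℕ) := fun i =>
    {i} ×ˢ Finset.range ((span (jobs i)).card - (jobs i).p)
  let N : ι → Finset ((Fin m × ℕ) ⊕ (Fin n × ℕ)) := fun x =>
    (slotN x.1.2).disjSum (idleN x.1.1)
  have hall : ∀ s : Finset ι, s.card ≤ (s.biUnion N).card := by
    intro s
    let Y := s.image (fun x => x.1.2)
    let J := s.image (fun x => x.1.1)
    have hYT : Y ⊆ Finset.range T := by
      intro t ht
      simp only [Y, Finset.mem_image] at ht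
      obtain ⟨x, _, rfl⟩ := ht
      have := x.2
      simp only [span, Finset.mem_Ico] at this
      have := hd x.1.1
      simp
      omega
    have hb : s.biUnion N = (Y.biUnion slotN).disjSum (J.biUnion idleN) := by
      ext x
      simp only [Finset.mem_biUnion, N, Y, J]
      rcases x with x | x
      · simp only [Finset.inl_mem_disjSum, Finset.mem_biUnion, Finset.mem_image]
        constructor
        · rintro ⟨a, ha, hx⟩; exact ⟨_, ⟨a, ha, rfl⟩, hx⟩
        · rintro ⟨_, ⟨a, ha, rfl⟩, hx⟩; exact ⟨a, ha, hx⟩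
      · simp only [Finset.inr_mem_disjSum, Finset.mem_biUnion, Finset.mem_image]
        constructor
        · rintro ⟨a, ha, hx⟩; exact ⟨_, ⟨a, ha, rfl⟩, hx⟩
        · rintro ⟨_, ⟨a, ha, rfl⟩, hx⟩; exact ⟨a, ha, hx⟩
    have c1 : (Y.biUnion slotN).card = ∑ t ∈ Y, activeCount A t := by
      rw [Finset.card_biUnion]
      · refine Finset.sum_congr rfl fun t _ => ?_
        simp [slotN, activeCount]
      · intro t _ t' _ hne
        rw [Function.onFun, Finset.disjoint_left]
        rintro ⟨k, u⟩ h1 h2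
        simp only [slotN, Finset.mem_product, Finset.mem_singleton] at h1 h2
        exact hne (h1.2.symm.trans h2.2)
    have c2 : (J.biUnion idleN).card = ∑ i ∈ J, ((span (jobs i)).card - (jobs i).p) := by
      rw [Finset.card_biUnion]
      · refine Finset.sum_congr rfl fun t _ => ?_
        simp [idleN]
      · intro t _ t' _ hne
        rw [Function.onFun, Finset.disjoint_left]
        rintro ⟨k, u⟩ h1 h2
        simp only [idleN, Finset.mem_product, Finset.mem_singleton] at h1 h2
        exact hne (h1.1.symm.trans h2.1)
    have c3 : s.card ≤ ∑ i ∈ J, (span (jobs i) ∩ Y).card := by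
      have e : s.card = (s.image (fun x => x.1)).card :=
        (Finset.card_image_of_injective _ Subtype.val_injective).symm
      rw [e, ← Finset.card_sigma]
      refine Finset.card_le_card_of_injOn (fun x => ⟨x.1, x.2⟩) ?_ ?_
      · intro x hx
        simp only [Finset.coe_image, Set.mem_image, Finset.mem_coe] at hx
        obtain ⟨y, hy, rfl⟩ := hx
        simp only [Finset.mem_coe, Finset.mem_sigma, Finset.mem_inter, J, Y]
        exact ⟨Finset.mem_image_of_mem _ hy, y.2, Finset.mem_image.2 ⟨y, hy, rfl⟩⟩
      · rintro ⟨a, b⟩ _ ⟨c, d⟩ _ hxy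
        simpa using hxy
    have c4 : ∑ i ∈ J, (span (jobs i) ∩ Y).card
        ≤ ∑ i ∈ J, ((span (jobs i)).card - (jobs i).p) + ∑ i ∈ J, forced (jobs i) Y := by
      rw [← Finset.sum_add_distrib]
      refine Finset.sum_le_sum fun i _ => ?_
      have := Finset.card_inter_add_card_sdiff (span (jobs i)) Y
      unfold forced
      omega
    have c5 : ∑ i ∈ J, forced (jobs i) Y ≤ tot jobs Y :=
      Finset.sum_le_sum_of_subset (Finset.subset_univ _)
    have c6 := h Y hYT
    rw [hb, Finset.card_disjSum, c1, c2]
    omega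
  obtain ⟨F, hinj, hF⟩ := (Finset.all_card_le_biUnion_card_iff_exists_injective N).1 hall
  -- R i k t: job i gets machine k at slot t in the matching
  let R : Fin n → Fin m → ℕ → Prop := fun i k t =>
    ∃ ht : t ∈ span (jobs i), F ⟨(i, t), ht⟩ = Sum.inl (k, t)
  have hRuniq : ∀ i k k' t, R i k t → R i k' t → k = k' := by
    rintro i k k' t ⟨h1, e1⟩ ⟨h2, e2⟩
    rw [e1] at e2
    simpa using e2
  have hRinj : ∀ i i' k t, R i k t → R i' k t → i = i' := by
    rintro i i' k t ⟨h1, e1⟩ ⟨h2, e2⟩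
    have := congrArg (fun x : ι => x.1.1) (hinj (e1.trans e2.symm))
    exact this
  have hRA : ∀ i k t, R i k t → t ∈ A k := by
    rintro i k t ⟨h1, e1⟩
    have := hF ⟨(i, t), h1⟩
    rw [e1] at this
    simpa [N, slotN] using this
  have hcount : ∀ i, (jobs i).p ≤ ((span (jobs i)).filter (fun t => ∃ k, R i k t)).card := by
    intro i
    have hs := Finset.card_filter_add_card_filter_not (s := span (jobs i)) (fun t => ∃ k, R i k t)
    have hidle : ((span (jobs i)).filter (fun t => ¬ ∃ k, R i k t)).card
        ≤ (span (jobs i)).card - (jobs i).p := by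
      have e : (span (jobs i)).card - (jobs i).p
          = ((idleN i).image (Sum.inr : _ → (Fin m × ℕ) ⊕ (Fin n × ℕ))).card := by
        rw [Finset.card_image_of_injective _ Sum.inr_injective]
        simp [idleN]
      rw [e]
      rw [← Finset.card_attach]
      refine Finset.card_le_card_of_injOn
        (fun t => F ⟨(i, t.1), (Finset.mem_filter.1 t.2).1⟩) ?_ ?_
      · rintro ⟨t, ht⟩ _
        obtain ⟨h1, h2⟩ := Finset.mem_filter.1 ht
        have hf := hF ⟨(i, t), h1⟩
        simp only [Finset.coe_image, Set.mem_image, Finset.mem_coe]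
        rcases hx : F ⟨(i, t), h1⟩ with ⟨k, u⟩ | y
        · rw [hx] at hf
          have hu : u = t := by
            simp [N, slotN] at hf
            exact hf.2.symm
          exact absurd ⟨k, h1, by rw [hx, hu]⟩ h2
        · rw [hx] at hf
          exact ⟨y, by simpa [N] using hf, rfl⟩
      · rintro ⟨t, ht⟩ _ ⟨t', ht'⟩ _ hh
        have := congrArg (fun x : ι => x.1.2) (hinj hh)
        exact Subtype.ext this
    have hp : (jobs i).p ≤ (span (jobs i)).card := by
      have := (hval i).2
      simp [span]; omega
    omega
  choose Q hQsub hQcard using fun i => Finset.exists_subset_card_eq (hcount i)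
  let σ : Fin m → ℕ → Option (Fin n) := fun k t =>
    if hx : ∃ i, t ∈ Q i ∧ R i k t then some hx.choose else none
  have hσ : ∀ k t i, σ k t = some i ↔ (t ∈ Q i ∧ R i k t) := by
    intro k t i
    simp only [σ]
    constructor
    · intro hh
      split_ifs at hh with hx
      rw [← Option.some.inj hh]
      exact hx.choose_spec
    · intro hh
      have hx : ∃ i, t ∈ Q i ∧ R i k t := ⟨i, hh⟩
      rw [dif_pos hx]
      exact congrArg some (hRinj _ _ _ _ hx.choose_spec.2 hh.2)
  refine ⟨σ, ?_, ?_, ?_, ?_⟩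
  · intro k t ht
    obtain ⟨i, hi⟩ := Option.isSome_iff_exists.1 ht
    exact hRA _ _ _ ((hσ _ _ _).1 hi).2
  · intro k t i hi
    obtain ⟨ht, _⟩ := ((hσ _ _ _).1 hi).2
    simp only [span, Finset.mem_Ico] at ht
    omega
  · intro k k' t i h1 h2
    exact hRuniq _ _ _ _ ((hσ _ _ _).1 h1).2 ((hσ _ _ _).1 h2).2
  · intro i
    rw [← hQcard i, ← Finset.card_biUnion]
    · congr 1
      ext t
      simp only [Finset.mem_biUnion, Finset.mem_filter, Finset.mem_univ, true_and, hσ]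
      constructor
      · rintro ⟨k, _, hh, _⟩; exact hh
      · intro hh
        obtain ⟨k, hk⟩ := (Finset.mem_filter.1 (hQsub i hh)).2
        exact ⟨k, hRA _ _ _ hk, hh, hk⟩
    · intro k _ k' _ hne
      rw [Function.onFun, Finset.disjoint_left]
      intro t ht ht'
      simp only [Finset.mem_filter, hσ] at ht ht'
      exact hne (hRuniq _ _ _ _ ht.2.2 ht'.2.2)

lemma runs_insert_left {A : Finset ℕ} {t : ℕ} (h : t ∉ A) (h1 : t + 1 ∈ A) :
    runs (insert t A) ≤ runs A := by
  unfold runs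
  have hs : t + 1 ∈ A.filter (fun t => ∀ s ∈ A, s + 1 ≠ t) := by
    rw [Finset.mem_filter]
    refine ⟨h1, fun s hs he => ?_⟩
    have : s = t := by omega
    exact h (this ▸ hs)
  have hsub : (insert t A).filter (fun x => ∀ s ∈ insert t A, s + 1 ≠ x)
      ⊆ insert t ((A.filter (fun t => ∀ s ∈ A, s + 1 ≠ t)).erase (t + 1)) := by
    intro x hx
    simp only [Finset.mem_filter, Finset.mem_insert, Finset.mem_erase] at hx ⊢
    obtain ⟨hx1, hx2⟩ := hx
    rcases hx1 with rfl | hx1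
    · exact Or.inl rfl
    · exact Or.inr ⟨fun e => hx2 t (Or.inl rfl) e.symm, hx1, fun s hs => hx2 s (Or.inr hs)⟩
  have h2 := (Finset.card_le_card hsub).trans (Finset.card_insert_le _ _)
  have h3 := Finset.card_erase_add_one hs
  omega

lemma runs_insert_right {A : Finset ℕ} {t : ℕ} (h1 : t ∈ A) :
    runs (insert (t + 1) A) ≤ runs A := by
  unfold runs
  apply Finset.card_le_card
  intro x hx
  simp only [Finset.mem_filter, Finset.mem_insert] at hx ⊢
  obtain ⟨hx1, hx2⟩ := hx
  rcases hx1 with rfl | hx1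
  · exact absurd rfl (hx2 t (Or.inr h1))
  · exact ⟨hx1, fun s hs => hx2 s (Or.inr hs)⟩

lemma cost_insert {q : ℝ} (hq : 0 < q) {A : Finset ℕ} {t : ℕ} (h : t ∉ A)
    (hr : runs (insert t A) ≤ runs A) : cost q (insert t A) ≤ cost q A + 1 := by
  unfold cost
  rw [Finset.card_insert_of_notMem h]
  have : (runs (insert t A) : ℝ) ≤ runs A := by exact_mod_cast hr
  push_cast
  nlinarith

/-- Level set of the activity profile. -/
noncomputable def level {m : ℕ} (A : Fin m → Finset ℕ) (j : ℕ) : Finset ℕ :=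
  (Finset.univ.biUnion A).filter (fun t => j < activeCount A t)

lemma mem_level {m : ℕ} (A : Fin m → Finset ℕ) (j t : ℕ) :
    t ∈ level A j ↔ j < activeCount A t := by
  unfold level
  rw [Finset.mem_filter, and_iff_right_iff_imp]
  intro h
  have : 0 < activeCount A t := by omega
  obtain ⟨k, hk⟩ := Finset.card_pos.1 this
  exact Finset.mem_biUnion.2 ⟨k, Finset.mem_univ _, (Finset.mem_filter.1 hk).2⟩

lemma activeCount_le {m : ℕ} (A : Fin m → Finset ℕ) (t : ℕ) : activeCount A t ≤ m := by
  unfold activeCount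
  exact (Finset.card_le_univ _).trans (by simp)

/-- Turning a predicate count over levels/machines into a per-slot count. -/
lemma sum_card_filter {ι : Type*} (I : Finset ι) (U : Finset ℕ) (C : ι → Finset ℕ)
    (hC : ∀ i ∈ I, C i ⊆ U) :
    ∑ i ∈ I, (C i).card = ∑ t ∈ U, (I.filter (fun i => t ∈ C i)).card := by
  have : ∀ i ∈ I, (C i).card = (U.filter (fun t => t ∈ C i)).card := by
    intro i hi
    congr 1
    ext t
    simp only [Finset.mem_filter]
    exact ⟨fun h => ⟨hC i hi h, h⟩, fun h => h.2⟩
  rw [Finset.sum_congr rfl this]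
  simp only [Finset.card_filter]
  exact Finset.sum_comm

lemma sum_card_level {m : ℕ} (A : Fin m → Finset ℕ) :
    ∑ j ∈ Finset.range m, (level A j).card ≤ ∑ k, (A k).card := by
  rw [sum_card_filter (Finset.range m) (Finset.univ.biUnion A) (level A)
      (fun j _ => Finset.filter_subset _ _),
    sum_card_filter Finset.univ (Finset.univ.biUnion A) A
      (fun k hk => Finset.subset_biUnion_of_mem A hk)]
  refine Finset.sum_le_sum fun t _ => ?_
  have : (Finset.range m).filter (fun j => t ∈ level A j) ⊆ Finset.range (activeCount A t) := by
    intro j hj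
    rw [Finset.mem_filter, mem_level] at hj
    exact Finset.mem_range.2 hj.2
  have := Finset.card_le_card this
  rw [Finset.card_range] at this
  exact this

lemma sum_runs_level {m : ℕ} (A : Fin m → Finset ℕ) :
    ∑ j ∈ Finset.range m, runs (level A j) ≤ ∑ k, runs (A k) := by
  unfold runs
  rw [sum_card_filter (Finset.range m) (Finset.univ.biUnion A)
      (fun j => (level A j).filter (fun t => ∀ s ∈ level A j, s + 1 ≠ t))
      (fun j _ => (Finset.filter_subset _ _).trans (Finset.filter_subset _ _)),
    sum_card_filter Finset.univ (Finset.univ.biUnion A)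
      (fun k => (A k).filter (fun t => ∀ s ∈ A k, s + 1 ≠ t))
      (fun k hk => (Finset.filter_subset _ _).trans (Finset.subset_biUnion_of_mem A hk))]
  refine Finset.sum_le_sum fun t _ => ?_
  rcases t with _ | t
  · have : (Finset.range m).filter (fun j => 0 ∈ (level A j).filter
        (fun t => ∀ s ∈ level A j, s + 1 ≠ t)) ⊆ Finset.range (activeCount A 0) := by
      intro j hj
      rw [Finset.mem_filter, Finset.mem_filter, mem_level] at hj
      exact Finset.mem_range.2 hj.2.1
    refine (Finset.card_le_card this).trans ?_
    rw [Finset.card_range]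
    apply Finset.card_le_card
    intro k hk
    simp only [Finset.mem_filter, Finset.mem_univ, true_and] at hk ⊢
    exact ⟨hk, fun s _ => by omega⟩
  · have : (Finset.range m).filter (fun j => t + 1 ∈ (level A j).filter
        (fun t => ∀ s ∈ level A j, s + 1 ≠ t))
        ⊆ Finset.Ico (activeCount A t) (activeCount A (t + 1)) := by
      intro j hj
      rw [Finset.mem_filter, Finset.mem_filter, mem_level] at hj
      refine Finset.mem_Ico.2 ⟨?_, hj.2.1⟩
      by_contra hlt
      exact hj.2.2 t ((mem_level A j t).2 (by omega)) rfl
    refine (Finset.card_le_card this).trans ?_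
    rw [Nat.card_Ico]
    unfold activeCount
    refine (Finset.le_card_sdiff _ _).trans (Finset.card_le_card ?_)
    intro k hk
    simp only [Finset.mem_sdiff, Finset.mem_filter, Finset.mem_univ, true_and] at hk ⊢
    refine ⟨hk.1, fun s hs he => hk.2 ?_⟩
    have : s = t := by omega
    exact this ▸ hs

lemma sum_cost_level {m : ℕ} {q : ℝ} (hq : 0 < q) (A : Fin m → Finset ℕ) :
    ∑ j ∈ Finset.range m, cost q (level A j) ≤ energy q A := by
  unfold energy cost
  rw [Finset.sum_add_distrib, Finset.sum_add_distrib, ← Finset.mul_sum, ← Finset.mul_sum]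
  have h1 : (∑ j ∈ Finset.range m, ((level A j).card : ℝ)) ≤ ∑ k, ((A k).card : ℝ) := by
    exact_mod_cast sum_card_level A
  have h2 : (∑ j ∈ Finset.range m, (runs (level A j) : ℝ)) ≤ ∑ k, (runs (A k) : ℝ) := by
    exact_mod_cast sum_runs_level A
  have := mul_le_mul_of_nonneg_left h2 hq.le
  linarith

lemma cost_nonneg {q : ℝ} (hq : 0 < q) (A : Finset ℕ) : 0 ≤ cost q A := by
  unfold cost; positivity

lemma energy_nonneg {m : ℕ} {q : ℝ} (hq : 0 < q) (A : Fin m → Finset ℕ) : 0 ≤ energy q A :=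
  Finset.sum_nonneg fun _ _ => cost_nonneg hq _

lemma sum_div_three (F : ℕ → ℝ) (m : ℕ) :
    ∑ k ∈ Finset.range (3 * m), F (k / 3) = 3 * ∑ j ∈ Finset.range m, F j := by
  induction m with
  | zero => simp
  | succ m ih =>
    rw [show 3 * (m + 1) = 3 * m + 1 + 1 + 1 by ring, Finset.sum_range_succ,
      Finset.sum_range_succ, Finset.sum_range_succ, ih, Finset.sum_range_succ,
      show 3 * m / 3 = m by omega, show (3 * m + 1) / 3 = m by omega,
      show (3 * m + 1 + 1) / 3 = m by omega]
    ring

/-- Tripled profile. -/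
noncomputable def triple {m : ℕ} (A : Fin m → Finset ℕ) : Fin m → Finset ℕ :=
  fun k => level A (k.1 / 3)

lemma energy_triple {m : ℕ} {q : ℝ} (hq : 0 < q) (A : Fin m → Finset ℕ) :
    energy q (triple A) ≤ 3 * energy q A := by
  calc energy q (triple A) = ∑ k ∈ Finset.range m, cost q (level A (k / 3)) := by
        unfold energy triple
        exact Fin.sum_univ_eq_sum_range (fun k => cost q (level A (k / 3))) m
    _ ≤ ∑ k ∈ Finset.range (3 * m), cost q (level A (k / 3)) := by
        apply Finset.sum_le_sum_of_subset_of_nonneg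
        · exact Finset.range_subset_range.2 (by omega)
        · intro _ _ _; exact cost_nonneg hq _
    _ = 3 * ∑ j ∈ Finset.range m, cost q (level A j) :=
        sum_div_three (fun j => cost q (level A j)) m
    _ ≤ 3 * energy q A := by linarith [sum_cost_level hq A]

lemma activeCount_triple {m : ℕ} (A : Fin m → Finset ℕ) (t : ℕ) :
    min m (3 * activeCount A t) ≤ activeCount (triple A) t := by
  have h : ∀ k : Fin m, t ∈ triple A k ↔ k.1 < 3 * activeCount A t := by
    intro k
    unfold triple
    rw [mem_level]
    omega
  have e : activeCount (triple A) t
      = (Finset.univ.filter (fun k : Fin m => k.1 < 3 * activeCount A t)).card := by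
    rw [activeCount]
    simp only [h]
  rw [e]
  rw [← Finset.card_range (min m (3 * activeCount A t))]
  have : Finset.range (min m (3 * activeCount A t)) ⊆
      (Finset.univ.filter (fun k : Fin m => k.1 < 3 * activeCount A t)).image (fun k => k.1) := by
    intro x hx
    rw [Finset.mem_range, lt_min_iff] at hx
    exact Finset.mem_image.2 ⟨⟨x, hx.1⟩, by simpa using hx.2, rfl⟩
  exact (Finset.card_le_card this).trans Finset.card_image_le

lemma activeCount_mono {m : ℕ} {A B : Fin m → Finset ℕ} (h : ∀ k, A k ⊆ B k) (t : ℕ) :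
    activeCount A t ≤ activeCount B t := by
  unfold activeCount
  apply Finset.card_le_card
  intro k hk
  simp only [Finset.mem_filter, Finset.mem_univ, true_and] at hk ⊢
  exact h k hk

lemma exists_of_activeCount_lt {m : ℕ} {A : Fin m → Finset ℕ} {s t : ℕ}
    (h : activeCount A t < activeCount A s) : ∃ k, s ∈ A k ∧ t ∉ A k := by
  by_contra hne
  push Not at hne
  refine absurd h (not_lt.2 ?_)
  unfold activeCount
  apply Finset.card_le_card
  intro k hk
  simp only [Finset.mem_filter, Finset.mem_univ, true_and] at hk ⊢
  exact hne k hk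

lemma activeCount_update {m : ℕ} {A : Fin m → Finset ℕ} {k : Fin m} {t : ℕ} (h : t ∉ A k) :
    activeCount A t + 1 ≤ activeCount (Function.update A k (insert t (A k))) t := by
  unfold activeCount
  rw [← Finset.card_insert_of_notMem (a := k) (by simpa using h)]
  apply Finset.card_le_card
  intro k' hk'
  simp only [Finset.mem_insert, Finset.mem_filter, Finset.mem_univ, true_and] at hk' ⊢
  by_cases e : k' = k
  · subst e; simp
  · rw [Function.update_of_ne e]
    exact hk'.resolve_left e

lemma subset_update {m : ℕ} (A : Fin m → Finset ℕ) (k : Fin m) (t : ℕ) (k' : Fin m) :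
    A k' ⊆ Function.update A k (insert t (A k)) k' := by
  by_cases e : k' = k
  · subst e; simp
  · rw [Function.update_of_ne e]

lemma energy_update {m : ℕ} {q : ℝ} {A : Fin m → Finset ℕ} {k : Fin m} {C : Finset ℕ}
    (h : cost q C ≤ cost q (A k) + 1) :
    energy q (Function.update A k C) ≤ energy q A + 1 := by
  unfold energy
  rw [← Finset.add_sum_erase _ _ (Finset.mem_univ k),
    ← Finset.add_sum_erase Finset.univ (fun k => cost q (A k)) (Finset.mem_univ k)]
  have : ∑ x ∈ Finset.univ.erase k, cost q (Function.update A k C x)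
      = ∑ x ∈ Finset.univ.erase k, cost q (A x) := by
    refine Finset.sum_congr rfl fun x hx => ?_
    rw [Function.update_of_ne (Finset.ne_of_mem_erase hx)]
  rw [this, Function.update_self]
  linarith

/-- Main construction: every skeleton gives a feasible solution. -/
lemma main_step {n m : ℕ} {jobs : Fin n → Job} (hval : ∀ i, (jobs i).Valid)
    {q : ℝ} (hq : 0 < q) {l : ℕ → ℕ → ℕ}
    (hl : ∀ a b : ℕ, a < b →
      IsGreatest {ℓ : ℕ | BlackoutFeasible n m jobs a b ℓ} (l a b))
    (hfeas : ∃ (A : Fin m → Finset ℕ) (σ : Fin m → ℕ → Option (Fin n)),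
      MFeasible jobs A σ)
    {B : Fin m → Finset ℕ} (hB : MSkeleton m jobs l B) :
    ∃ (A : Fin m → Finset ℕ) (σ : Fin m → ℕ → Option (Fin n)), MFeasible jobs A σ ∧
      energy q A ≤ 3 * (energy q B + ((∑ i : Fin n, (jobs i).p : ℕ) : ℝ)) := by
  obtain ⟨T, hT⟩ : ∃ T, ∀ i, (jobs i).d ≤ T :=
    ⟨∑ i, (jobs i).d, fun i =>
      Finset.single_le_sum (f := fun i => (jobs i).d) (fun _ _ => Nat.zero_le _)
        (Finset.mem_univ i)⟩
  have hex : ∃ d : ℕ, ∃ A : Fin m → Finset ℕ, (∀ k, B k ⊆ A k) ∧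
      energy q A + d ≤ energy q B + ((∑ i : Fin n, (jobs i).p : ℕ) : ℝ) ∧
      ∀ Z ⊆ Finset.range T, tot jobs Z ≤ (∑ t ∈ Z, activeCount A t) + d := by
    refine ⟨∑ i, (jobs i).p, B, fun _ => le_rfl, le_rfl, fun Z _ => ?_⟩
    have : tot jobs Z ≤ ∑ i, (jobs i).p := Finset.sum_le_sum fun i _ => Nat.sub_le _ _
    omega
  obtain ⟨d, ⟨A, hBA, hE, hmax⟩, hmin⟩ :
      ∃ d : ℕ, (∃ A : Fin m → Finset ℕ, (∀ k, B k ⊆ A k) ∧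
      energy q A + d ≤ energy q B + ((∑ i : Fin n, (jobs i).p : ℕ) : ℝ) ∧
      ∀ Z ⊆ Finset.range T, tot jobs Z ≤ (∑ t ∈ Z, activeCount A t) + d) ∧
      ∀ d' < d, ¬ (∃ A : Fin m → Finset ℕ, (∀ k, B k ⊆ A k) ∧
      energy q A + d' ≤ energy q B + ((∑ i : Fin n, (jobs i).p : ℕ) : ℝ) ∧
      ∀ Z ⊆ Finset.range T, tot jobs Z ≤ (∑ t ∈ Z, activeCount A t) + d') :=
    ⟨Nat.find hex, Nat.find_spec hex, fun d' h => Nat.find_min hex h⟩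
  have htot0 : tot jobs ∅ = 0 := by
    unfold tot
    refine Finset.sum_eq_zero fun i _ => ?_
    have := (hval i).2
    simp [forced, span]
    omega
  let tight : Finset (Finset ℕ) := (Finset.range T).powerset.filter
    (fun Z => tot jobs Z = (∑ t ∈ Z, activeCount A t) + d)
  have hne : tight.Nonempty := by
    by_contra hemp
    rw [Finset.not_nonempty_iff_eq_empty] at hemp
    have hnt : ∀ Z ⊆ Finset.range T, tot jobs Z ≠ (∑ t ∈ Z, activeCount A t) + d := by
      intro Z hZ he
      have : Z ∈ tight := Finset.mem_filter.2 ⟨Finset.mem_powerset.2 hZ, he⟩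
      rw [hemp] at this
      simp at this
    have hd0 : d ≠ 0 := by
      rintro rfl
      exact hnt ∅ (by simp) (by simp [htot0])
    refine hmin (d - 1) (by omega) ⟨A, hBA, ?_, fun Z hZ => ?_⟩
    · have : ((d - 1 : ℕ) : ℝ) ≤ d := by exact_mod_cast Nat.sub_le _ _
      linarith
    · have h1 := hmax Z hZ
      have h2 := hnt Z hZ
      omega
  obtain ⟨Y0, hY0t, hY0min⟩ := Finset.exists_min_image tight Finset.card hne
  obtain ⟨hY0T, hY0⟩ := Finset.mem_filter.1 hY0t
  rw [Finset.mem_powerset] at hY0T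
  have hleast : ∀ Z ∈ tight, Y0 ⊆ Z := by
    intro Z hZ
    obtain ⟨hZT, hZe⟩ := Finset.mem_filter.1 hZ
    rw [Finset.mem_powerset] at hZT
    have h1 := tot_supermod jobs Y0 Z
    have h2 := hmax (Y0 ∪ Z) (Finset.union_subset hY0T hZT)
    have h3 := hmax (Y0 ∩ Z) (Finset.inter_subset_left.trans hY0T)
    have h4 := Finset.sum_union_inter (s₁ := Y0) (s₂ := Z) (f := fun t => activeCount A t)
    have h5 : Y0 ∩ Z ∈ tight := Finset.mem_filter.2
      ⟨Finset.mem_powerset.2 (Finset.inter_subset_left.trans hY0T), by omega⟩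
    have h6 := hY0min _ h5
    have h7 := Finset.eq_of_subset_of_card_le (Finset.inter_subset_left (s₁ := Y0) (s₂ := Z)) h6
    exact Finset.inter_eq_left.1 h7
  have hstuck : ∀ t ∈ Y0, ∀ k, t ∉ A k → ¬ runs (insert t (A k)) ≤ runs (A k) := by
    intro t ht k htk hr
    have hd0 : d ≠ 0 := by
      rintro rfl
      have : (∅ : Finset ℕ) ∈ tight := Finset.mem_filter.2 ⟨by simp, by simp [htot0]⟩
      exact absurd (hleast _ this ht) (by simp)
    refine hmin (d - 1) (by omega) ⟨Function.update A k (insert t (A k)),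
      fun k' => (hBA k').trans (subset_update A k t k'), ?_, fun Z hZ => ?_⟩
    · have := energy_update (cost_insert hq htk hr)
      have e : ((d - 1 : ℕ) : ℝ) = d - 1 := by
        rw [Nat.cast_sub (by omega)]; simp
      rw [e]
      linarith
    · have hmono : ∀ s, activeCount A s ≤ activeCount (Function.update A k (insert t (A k))) s :=
        activeCount_mono (subset_update A k t)
      by_cases hZt : Z ∈ tight
      · have htZ := hleast Z hZt ht
        have h1 : ∑ s ∈ Z, activeCount A s
            < ∑ s ∈ Z, activeCount (Function.update A k (insert t (A k))) s :=
          Finset.sum_lt_sum (fun s _ => hmono s) ⟨t, htZ, activeCount_update htk⟩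
        have := (Finset.mem_filter.1 hZt).2
        omega
      · have h1 : ∑ s ∈ Z, activeCount A s
            ≤ ∑ s ∈ Z, activeCount (Function.update A k (insert t (A k))) s :=
          Finset.sum_le_sum (fun s _ => hmono s)
        have h2 := hmax Z hZ
        have h3 : tot jobs Z ≠ (∑ t ∈ Z, activeCount A t) + d := fun he =>
          hZt (Finset.mem_filter.2 ⟨Finset.mem_powerset.2 hZ, he⟩)
        omega
  have hcore := core jobs m T hT (activeCount A) (activeCount_le A) d Y0 hY0T hmax hY0
    (by
      intro t ht
      by_contra hlt
      obtain ⟨k, h1, h2⟩ := exists_of_activeCount_lt (not_le.1 hlt)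
      exact hstuck t ht k h2 (runs_insert_left h2 h1))
    (by
      intro t ht
      by_contra hlt
      obtain ⟨k, h1, h2⟩ := exists_of_activeCount_lt (not_le.1 hlt)
      exact hstuck (t + 1) ht k h2 (runs_insert_right h1))
    (by
      intro Z
      obtain ⟨A', σ', h⟩ := hfeas
      refine (tot_le_of_feasible h Z).trans ?_
      exact Finset.sum_le_card_nsmul _ _ _ fun t _ => activeCount_le A' t)
    (by
      intro a b c hab hc Z hZ
      obtain ⟨t, hat, htb, ht⟩ := hB a b hab
      obtain ⟨_, A', σ', h, hA'⟩ := (hl a b hab).1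
      refine (tot_le_of_feasible h Z).trans ?_
      refine Finset.sum_le_card_nsmul _ _ _ fun s hs => ?_
      have hs' := Finset.mem_Ico.1 (hZ hs)
      have h1 := hA' s hs'.1 hs'.2
      have h2 := activeCount_mono hBA t
      have h3 := hc t (Finset.mem_Ico.2 ⟨hat, htb⟩)
      omega)
  obtain ⟨σ, hσ⟩ := feasible_of_tot hval T hT (triple A) (fun Y hY =>
    (hcore Y hY).trans (Finset.sum_le_sum fun t _ => activeCount_triple A t))
  refine ⟨triple A, σ, hσ, (energy_triple hq A).trans ?_⟩
  have : (0 : ℝ) ≤ d := Nat.cast_nonneg d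
  linarith

/-- A feasible solution is a skeleton. -/
lemma skeleton_of_feasible {n m : ℕ} {jobs : Fin n → Job} {l : ℕ → ℕ → ℕ}
    (hl : ∀ a b : ℕ, a < b →
      IsGreatest {ℓ : ℕ | BlackoutFeasible n m jobs a b ℓ} (l a b))
    {A : Fin m → Finset ℕ} {σ : Fin m → ℕ → Option (Fin n)} (h : MFeasible jobs A σ) :
    MSkeleton m jobs l A := by
  intro a b hab
  obtain ⟨t, ht, hmax⟩ := Finset.exists_max_image (Finset.Ico a b) (activeCount A)
    ⟨a, Finset.mem_Ico.2 ⟨le_rfl, hab⟩⟩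
  rw [Finset.mem_Ico] at ht
  refine ⟨t, ht.1, ht.2, ?_⟩
  have hle := activeCount_le A t
  have : m - activeCount A t ≤ l a b := by
    apply (hl a b hab).2
    refine ⟨Nat.sub_le _ _, A, σ, h, fun s h1 h2 => ?_⟩
    have := hmax s (Finset.mem_Ico.2 ⟨h1, h2⟩)
    omega
  omega

lemma work_le_energy {n m : ℕ} {jobs : Fin n → Job} {q : ℝ} (hq : 0 < q)
    {A : Fin m → Finset ℕ} {σ : Fin m → ℕ → Option (Fin n)} (h : MFeasible jobs A σ) :
    ((∑ i : Fin n, (jobs i).p : ℕ) : ℝ) ≤ energy q A := by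
  have h1 : ∑ i : Fin n, (jobs i).p ≤ ∑ k, (A k).card := by
    calc ∑ i : Fin n, (jobs i).p
        = ∑ i, ∑ k : Fin m, ((A k).filter (fun t => σ k t = some i)).card :=
          Finset.sum_congr rfl fun i _ => (h.2.2.2 i).symm
      _ = ∑ k : Fin m, ∑ i, ((A k).filter (fun t => σ k t = some i)).card := Finset.sum_comm
      _ ≤ ∑ k, (A k).card := by
          refine Finset.sum_le_sum fun k _ => ?_
          rw [← Finset.card_biUnion]
          · apply Finset.card_le_card
            intro t ht
            simp only [Finset.mem_biUnion, Finset.mem_filter, Finset.mem_univ, true_and] at ht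
            exact ht.choose_spec.1
          · intro i _ i' _ hne
            rw [Function.onFun, Finset.disjoint_left]
            intro t ht ht'
            simp only [Finset.mem_filter] at ht ht'
            exact hne (Option.some.inj (ht.2.symm.trans ht'.2))
  have h2 : ((∑ i : Fin n, (jobs i).p : ℕ) : ℝ) ≤ ∑ k, ((A k).card : ℝ) := by exact_mod_cast h1
  refine h2.trans ?_
  unfold energy cost
  refine Finset.sum_le_sum fun k _ => ?_
  have : 0 ≤ q * (runs (A k) : ℝ) := by positivity
  linarith

/-- The minimum skeleton cost is attained. -/
lemma exists_min_energy {m : ℕ} {q : ℝ} (hq : 0 < q) (P : (Fin m → Finset ℕ) → Prop)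
    (hne : ∃ B, P B) : ∃ B, P B ∧ ∀ B', P B' → energy q B ≤ energy q B' := by
  obtain ⟨B0, hB0⟩ := hne
  have hval : ∀ B : Fin m → Finset ℕ,
      energy q B = ((∑ k, (B k).card : ℕ) : ℝ) + q * ((∑ k, runs (B k) : ℕ) : ℝ) := by
    intro B
    unfold energy cost
    push_cast
    rw [Finset.sum_add_distrib, Finset.mul_sum]
  let s : Set ℝ := {c | c ≤ energy q B0 ∧ ∃ B, P B ∧ c = energy q B}
  have hfin : s.Finite := by
    obtain ⟨M, hM⟩ := exists_nat_ge (energy q B0)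
    obtain ⟨K, hK⟩ := exists_nat_ge (energy q B0 / q)
    refine Set.Finite.subset (Finset.finite_toSet
      (((Finset.range (M + 1)) ×ˢ (Finset.range (K + 1))).image
        (fun x : ℕ × ℕ => (x.1 : ℝ) + q * (x.2 : ℝ)))) ?_
    rintro c ⟨hc, B, _, rfl⟩
    rw [hval B] at hc ⊢
    simp only [Finset.coe_image, Set.mem_image, Finset.mem_coe]
    refine ⟨(∑ k, (B k).card, ∑ k, runs (B k)), ?_, rfl⟩
    have p1 : (0 : ℝ) ≤ ((∑ k, (B k).card : ℕ) : ℝ) := Nat.cast_nonneg _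
    have p2 : (0 : ℝ) ≤ q * ((∑ k, runs (B k) : ℕ) : ℝ) := by positivity
    rw [div_le_iff₀ hq] at hK
    have q1 : ((∑ k, (B k).card : ℕ) : ℝ) ≤ M := by linarith
    have q2 : ((∑ k, runs (B k) : ℕ) : ℝ) ≤ K := by
      refine le_of_mul_le_mul_left ?_ hq
      linarith
    simp only [Finset.mem_product, Finset.mem_range, Nat.lt_succ_iff]
    exact ⟨by exact_mod_cast q1, by exact_mod_cast q2⟩
  obtain ⟨c, ⟨hc, B, hB, rfl⟩, hmin⟩ := Set.exists_min_image s id hfin ⟨_, le_rfl, B0, hB0, rfl⟩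
  refine ⟨B, hB, fun B' hB' => ?_⟩
  by_cases h : energy q B' ≤ energy q B0
  · exact hmin _ ⟨h, B', hB', rfl⟩
  · linarith

end Skel

/-- if the instance is feasible on `m` machines and `q > 0`, there is a
feasible `m`-machine solution of energy at most `3(S* + P)` where `S*` is the minimum
skeleton cost; since `S* ≤ OPT` and `P ≤ OPT`, its energy is also at most `6·OPT`. -/
theorem stmt11 {n : ℕ} (m : ℕ) (jobs : Fin n → Job) (hval : ∀ i, (jobs i).Valid)
    (q : ℝ) (hq : 0 < q)
    (l : ℕ → ℕ → ℕ)
    (hl : ∀ a b : ℕ, a < b →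
      IsGreatest {ℓ : ℕ | BlackoutFeasible n m jobs a b ℓ} (l a b))
    (hfeas : ∃ (A : Fin m → Finset ℕ) (σ : Fin m → ℕ → Option (Fin n)),
      MFeasible jobs A σ) :
    ∃ (A : Fin m → Finset ℕ) (σ : Fin m → ℕ → Option (Fin n)), MFeasible jobs A σ ∧
      energy q A ≤ 3 *
        (sInf {c : ℝ | ∃ B : Fin m → Finset ℕ, MSkeleton m jobs l B ∧ c = energy q B}
          + ((∑ i : Fin n, (jobs i).p : ℕ) : ℝ)) ∧
      energy q A ≤ 6 *
        sInf {c : ℝ | ∃ (A' : Fin m → Finset ℕ) (σ' : Fin m → ℕ → Option (Fin n)),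
          MFeasible jobs A' σ' ∧ c = energy q A'} := by
  
  obtain ⟨A0, σ0, h0⟩ := hfeas
  obtain ⟨B, hB, hBmin⟩ := Skel.exists_min_energy hq (MSkeleton m jobs l)
    ⟨A0, Skel.skeleton_of_feasible hl h0⟩
  obtain ⟨A, σ, hA, hE⟩ := Skel.main_step hval hq hl ⟨A0, σ0, h0⟩ hB
  refine ⟨A, σ, hA, ?_, ?_⟩
  · have : sInf {c : ℝ | ∃ B : Fin m → Finset ℕ, MSkeleton m jobs l B ∧ c = energy q B}
        = energy q B := by
      apply IsLeast.csInf_eq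
      refine ⟨⟨B, hB, rfl⟩, ?_⟩
      rintro c ⟨B', hB', rfl⟩
      exact hBmin B' hB'
    rw [this]
    exact hE
  · have : energy q A / 6 ≤ sInf {c : ℝ | ∃ (A' : Fin m → Finset ℕ)
        (σ' : Fin m → ℕ → Option (Fin n)), MFeasible jobs A' σ' ∧ c = energy q A'} := by
      refine le_csInf ⟨energy q A0, A0, σ0, h0, rfl⟩ ?_
      rintro c ⟨A', σ', h', rfl⟩
      have h1 := hBmin A' (Skel.skeleton_of_feasible hl h')
      have h2 := Skel.work_le_energy hq h'
      linarith
    linarith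
end

section
/- (Integrality gap at most 2.) Assume the instance is feasible on m machines and let q > 0. Then for every feasible fractional solution (x, f) of the linear program, there exists a feasible m-machine solution whose energy is at most 2·Σ_I x_I(|I| + q). In particular, the minimum energy of a feasible m-machine solution is at most twice the optimum value of the linear program. -/
open scoped Classical

/-- All intervals `[a, b]` with integer endpoints `0 ≤ a < b ≤ D`. -/
def Intervals (D : ℕ) : Finset (ℕ × ℕ) :=
  (Finset.range (D + 1) ×ˢ Finset.range (D + 1)).filter (fun p => p.1 < p.2)


/-- `[p, q)` is a maximal run of `X`. -/
def XRun (X : Finset ℕ) (p q : ℕ) : Prop :=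
  p < q ∧ (∀ t, p ≤ t → t < q → t ∈ X) ∧ (∀ s, s + 1 = p → s ∉ X) ∧ q ∉ X

/-- A run that is paid for. -/
def XGood (S F : ℕ → ℤ) (p q : ℕ) : Prop :=
  2 ≤ S q - S p + F q - F p ∨ S (q - 1) < S q ∨ F p < F (p + 1)

/-- All runs are paid for. -/
def XInv (S F : ℕ → ℤ) (X : Finset ℕ) : Prop :=
  ∀ p q, XRun X p q → XGood S F p q

theorem xgood_one {S F : ℕ → ℤ} (hS : Monotone S) (hF : Monotone F) {p q : ℕ} (h : p < q)
    (hg : XGood S F p q) : 1 ≤ S q - S p + F q - F p := by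
  have h1 := hS h.le
  have h2 := hF h.le
  rcases hg with hg | hg | hg
  · omega
  · have := hS (show p ≤ q - 1 by omega)
    omega
  · have := hF (show p + 1 ≤ q by omega)
    omega

theorem xinv_insert {S F : ℕ → ℤ} {X : Finset ℕ} {z : ℕ} (hI : XInv S F X)
    (h : ∀ p q, p ≤ z → z < q → (p < z → XRun X p z) → (z + 1 < q → XRun X (z + 1) q) →
      (∀ s, s + 1 = p → s ∉ X) → q ∉ X → XGood S F p q) (hz : z ∉ X) :
    XInv S F (insert z X) := by
  rintro p q ⟨h1, h2, h3, h4⟩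
  simp only [Finset.mem_insert, not_or] at h2 h3 h4
  by_cases hz1 : p ≤ z ∧ z < q
  · apply h p q hz1.1 hz1.2
    · intro hp
      refine ⟨hp, fun t ht1 ht2 => ?_, fun s hs => (h3 s hs).2, hz⟩
      rcases h2 t ht1 (by omega) with h | h
      · omega
      · exact h
    · intro hp
      refine ⟨hp, fun t ht1 ht2 => ?_, fun s hs => ?_, h4.2⟩
      · rcases h2 t (by omega) (by omega) with h | h
        · omega
        · exact h
      · have : s = z := by omega
        rwa [this]
    · exact fun s hs => (h3 s hs).2
    · exact h4.2
  · apply hI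
    refine ⟨h1, fun t ht1 ht2 => ?_, fun s hs => (h3 s hs).2, h4.2⟩
    rcases h2 t ht1 ht2 with h | h
    · omega
    · exact h

theorem xrun_exists_right (X : Finset ℕ) (D a : ℕ) (hX : ∀ t ∈ X, t < D) (ha : a ∈ X)
    (hl : ∀ s, s + 1 = a → s ∉ X) : ∃ q, XRun X a q ∧ q ≤ D := by
  have hex : ∃ q, a < q ∧ q ∉ X := ⟨D, hX a ha, fun h => absurd (hX D h) (by omega)⟩
  refine ⟨Nat.find hex, ⟨(Nat.find_spec hex).1, ?_, hl, (Nat.find_spec hex).2⟩, ?_⟩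
  · intro t h1 h2
    have := Nat.find_min hex h2
    by_contra h
    rcases Nat.eq_or_lt_of_le h1 with e | e
    · subst e; exact h ha
    · exact this ⟨e, h⟩
  · exact Nat.find_min' hex ⟨hX a ha, fun h => absurd (hX D h) (by omega)⟩

theorem xrun_exists_left (X : Finset ℕ) (b : ℕ) (hb : b + 1 ∉ X) (ha : b ∈ X) :
    ∃ p, XRun X p (b + 1) := by
  have hex : ∃ p, p ≤ b ∧ ∀ t, p ≤ t → t ≤ b → t ∈ X :=
    ⟨b, le_rfl, fun t h1 h2 => by rwa [show t = b by omega]⟩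
  obtain ⟨h1, h2⟩ := Nat.find_spec hex
  refine ⟨Nat.find hex, by omega, fun t h3 h4 => h2 t h3 (by omega), ?_, hb⟩
  intro s hs hsX
  have := Nat.find_min hex (show s < Nat.find hex by omega)
  apply this
  refine ⟨by omega, fun t h3 h4 => ?_⟩
  rcases Nat.eq_or_lt_of_le h3 with e | e
  · rwa [← e]
  · exact h2 t (by omega) h4

theorem xrun_left_unique {X : Finset ℕ} {p p' q : ℕ} (h : XRun X p q) (h' : XRun X p' q) :
    p = p' := by
  by_contra hne
  rcases Nat.lt_or_gt_of_ne hne with hl | hl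
  · exact h'.2.2.1 (p' - 1) (by omega) (h.2.1 _ (by omega) (by have := h'.1; omega))
  · exact h.2.2.1 (p - 1) (by omega) (h'.2.1 _ (by omega) (by have := h.1; omega))

theorem xrun_right_unique {X : Finset ℕ} {p q q' : ℕ} (h : XRun X p q) (h' : XRun X p q') :
    q = q' := by
  by_contra hne
  rcases Nat.lt_or_gt_of_ne hne with hl | hl
  · exact h.2.2.2 (h'.2.1 _ h.1.le hl)
  · exact h'.2.2.2 (h.2.1 _ h'.1.le hl)

/-- A slot by which `X` can be extended. -/
def XExt (S F : ℕ → ℤ) (m D : ℕ) (X : Finset ℕ) (z : ℕ) : Prop :=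
  z < D ∧ z ∉ X ∧ S z - F (z + 1) < m ∧ XInv S F (insert z X)

theorem xhost {S F : ℕ → ℤ} (hS : Monotone S) (hF : Monotone F) {m D : ℕ} {X : Finset ℕ}
    (hI : XInv S F X) {s : ℕ} (hs : s < D) (hsX : s ∉ X) (hc : S s - F (s + 1) < m)
    (hE : ¬ XExt S F m D X s) : S (s + 1) = S s ∧ F (s + 1) = F s := by
  have h1 := hS (Nat.le_succ s)
  have h2 := hF (Nat.le_succ s)
  simp only [Nat.succ_eq_add_one] at h1 h2
  by_contra hne
  apply hE
  refine ⟨hs, hsX, hc, xinv_insert hI ?_ hsX⟩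
  intro p q hp hq hl hr _ _
  have h3 := hS hp
  have h4 := hF hp
  have h5 := hS (show s + 1 ≤ q from hq)
  have h6 := hF (show s + 1 ≤ q from hq)
  by_cases hSs : S s < S (s + 1)
  · rcases Nat.eq_or_lt_of_le (show s + 1 ≤ q from hq) with e | e
    · right; left
      subst e
      simpa using hSs
    · left
      have := xgood_one hS hF e (hI _ _ (hr e))
      omega
  · have hFs : F s < F (s + 1) := by
      by_contra h
      exact hne ⟨by omega, by omega⟩
    rcases Nat.eq_or_lt_of_le hp with e | e
    · right; right
      subst e
      exact hFs
    · left
      have := xgood_one hS hF e (hI _ _ (hl e))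
      omega

theorem xright {S F : ℕ → ℤ} (hS : Monotone S) (hF : Monotone F) {m D : ℕ} {X : Finset ℕ}
    (hI : XInv S F X) (hX : ∀ t ∈ X, t < D) : ∀ k s : ℕ, s + k = D → s < D → s ∉ X →
    S s - F (s + 1) < m → ¬ XExt S F m D X s →
    ∃ Q, s < Q ∧ Q ≤ D ∧ (Q = D ∨ XExt S F m D X Q) ∧ S Q = S s ∧
      ∀ t, s ≤ t → t < Q → S t - F (t + 1) + (if t ∈ X then 1 else 0) = S s - F s := by
  intro k
  induction k with
  | zero => intro s h1 h2; omega
  | succ k ih =>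
    intro s hk hs hsX hc hE
    obtain ⟨hS1, hF1⟩ := xhost hS hF hI hs hsX hc hE
    have base : ∀ t, s ≤ t → t < s + 1 →
        S t - F (t + 1) + (if t ∈ X then 1 else 0) = S s - F s := by
      intro t h1 h2
      have : t = s := by omega
      subst this
      rw [if_neg hsX, hF1]; ring
    by_cases hD : s + 1 = D
    · exact ⟨s + 1, by omega, by omega, Or.inl hD, hS1, base⟩
    by_cases hX1 : s + 1 ∈ X
    · obtain ⟨q, hrun, hqD⟩ := xrun_exists_right X D (s + 1) hX hX1
        (fun s' hs' => by rwa [show s' = s by omega])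
      have hsq : s + 1 < q := hrun.1
      have hbad : ¬ XGood S F s q := by
        intro hg
        apply hE
        refine ⟨hs, hsX, hc, xinv_insert hI ?_ hsX⟩
        intro p' q' hp' hq' hl hr _ hq'X
        have hq'1 : s + 1 < q' := by
          rcases Nat.eq_or_lt_of_le (show s + 1 ≤ q' from hq') with e | e
          · subst e; exact absurd hX1 hq'X
          · exact e
        have hqq := xrun_right_unique hrun (hr hq'1)
        subst hqq
        rcases Nat.eq_or_lt_of_le hp' with e | e
        · rw [e]; exact hg
        · left
          have a1 := xgood_one hS hF e (hI _ _ (hl e))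
          have a2 := xgood_one hS hF hsq (hI _ _ hrun)
          omega
      simp only [XGood, not_or, not_le, not_lt] at hbad
      obtain ⟨b1, b2, b3⟩ := hbad
      have hgood := hI _ _ hrun
      have e1 := hS hsq.le
      have e2 := hF hsq.le
      have hFj : F (s + 1) < F (s + 1 + 1) := by
        rcases hgood with g | g | g
        · omega
        · omega
        · exact g
      have e3 := hF (show s + 1 + 1 ≤ q from hsq)
      have lev : ∀ t, s ≤ t → t < q →
          S t - F (t + 1) + (if t ∈ X then 1 else 0) = S s - F s := by
        intro t h1 h2
        rcases Nat.eq_or_lt_of_le h1 with e | e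
        · exact base t h1 (by omega)
        · rw [if_pos (hrun.2.1 t e h2)]
          have := hS (show s + 1 ≤ t from e)
          have := hS h2.le
          have := hF (show s + 1 + 1 ≤ t + 1 by omega)
          have := hF (show t + 1 ≤ q from h2)
          omega
      refine ⟨q, by omega, hqD, ?_, by omega, lev⟩
      by_cases hqD' : q = D
      · exact Or.inl hqD'
      · right
        have e4 := hF (Nat.le_succ q)
        simp only [Nat.succ_eq_add_one] at e4
        refine ⟨by omega, hrun.2.2.2, by omega, xinv_insert hI ?_ hrun.2.2.2⟩
        intro p' q' hp' hq' hl hr hpb _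
        rcases Nat.eq_or_lt_of_le hp' with e | e
        · exact absurd (hrun.2.1 (q - 1) (by omega) (by omega)) (hpb _ (by omega))
        · have := xrun_left_unique hrun (hl e)
          subst this
          right; right; exact hFj
    · have e4 := hF (Nat.le_succ (s + 1))
      simp only [Nat.succ_eq_add_one] at e4
      by_cases hE1 : XExt S F m D X (s + 1)
      · exact ⟨s + 1, by omega, by omega, Or.inr hE1, hS1, base⟩
      · have hc1 : S (s + 1) - F (s + 1 + 1) < m := by omega
        obtain ⟨Q, q1, q2, q3, q4, q5⟩ := ih (s + 1) (by omega) (by omega) hX1 hc1 hE1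
        refine ⟨Q, by omega, q2, q3, by omega, ?_⟩
        intro t h1 h2
        rcases Nat.eq_or_lt_of_le h1 with e | e
        · exact base t h1 (by omega)
        · rw [q5 t e h2]; omega

theorem xleft {S F : ℕ → ℤ} (hS : Monotone S) (hF : Monotone F) {m D : ℕ} {X : Finset ℕ}
    (hI : XInv S F X) : ∀ s : ℕ, s < D → s ∉ X →
    S s - F (s + 1) < m → ¬ XExt S F m D X s →
    ∃ P, P ≤ s ∧ (P = 0 ∨ ∃ w, w + 1 = P ∧ XExt S F m D X w) ∧ F P = F s ∧
      ∀ t, P ≤ t → t ≤ s → S t - F (t + 1) + (if t ∈ X then 1 else 0) = S s - F s := by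
  intro s
  induction s with
  | zero =>
    intro hs hsX hc hE
    obtain ⟨hS1, hF1⟩ := xhost hS hF hI hs hsX hc hE
    refine ⟨0, le_rfl, Or.inl rfl, rfl, ?_⟩
    intro t _ h2
    have : t = 0 := by omega
    subst this
    rw [if_neg hsX, hF1]; ring
  | succ s ih =>
    intro hs hsX hc hE
    obtain ⟨hS1, hF1⟩ := xhost hS hF hI hs hsX hc hE
    have base : ∀ t, s + 1 ≤ t → t ≤ s + 1 →
        S t - F (t + 1) + (if t ∈ X then 1 else 0) = S (s + 1) - F (s + 1) := by
      intro t h1 h2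
      have : t = s + 1 := by omega
      subst this
      rw [if_neg hsX, hF1]; ring
    by_cases hX1 : s ∈ X
    · obtain ⟨p, hrun⟩ := xrun_exists_left X s hsX hX1
      have hps : p < s + 1 := hrun.1
      have hbad : ¬ XGood S F p (s + 1 + 1) := by
        intro hg
        apply hE
        refine ⟨hs, hsX, hc, xinv_insert hI ?_ hsX⟩
        intro p' q' hp' hq' hl hr hpb hq'X
        have hp'1 : p' < s + 1 := by
          rcases Nat.eq_or_lt_of_le hp' with e | e
          · exact absurd hX1 (hpb s e.symm)
          · exact e
        have hqq := xrun_left_unique hrun (hl hp'1)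
        subst hqq
        rcases Nat.eq_or_lt_of_le (show s + 1 + 1 ≤ q' from hq') with e | e
        · rw [← e]; exact hg
        · left
          have a1 := xgood_one hS hF e (hI _ _ (hr e))
          have a2 := xgood_one hS hF hps (hI _ _ hrun)
          omega
      simp only [XGood, not_or, not_le, not_lt] at hbad
      obtain ⟨b1, b2, b3⟩ := hbad
      have hgood := hI _ _ hrun
      have e1 := hS hps.le
      have e2 := hF hps.le
      have hSj : S s < S (s + 1) := by
        rcases hgood with g | g | g
        · omega
        · simpa using g
        · omega
      have e3 := hS (show p ≤ s by omega)
      have lev : ∀ t, p ≤ t → t ≤ s + 1 →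
          S t - F (t + 1) + (if t ∈ X then 1 else 0) = S (s + 1) - F (s + 1) := by
        intro t h1 h2
        rcases Nat.eq_or_lt_of_le h2 with e | e
        · exact base t (by omega) h2
        · rw [if_pos (hrun.2.1 t h1 e)]
          have := hS h1
          have := hS (show t ≤ s by omega)
          have := hF (show p ≤ t + 1 by omega)
          have := hF (show t + 1 ≤ s + 1 by omega)
          omega
      refine ⟨p, by omega, ?_, by omega, lev⟩
      rcases Nat.eq_zero_or_pos p with hp0 | hp0
      · exact Or.inl hp0
      · right
        obtain ⟨w, rfl⟩ : ∃ w, p = w + 1 := ⟨p - 1, by omega⟩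
        have hwX := hrun.2.2.1 w rfl
        have e4 := hS (Nat.le_succ w)
        simp only [Nat.succ_eq_add_one] at e4
        refine ⟨w, rfl, by omega, hwX, by omega, xinv_insert hI ?_ hwX⟩
        intro p' q' hp' hq' hl hr _ hqX
        rcases Nat.eq_or_lt_of_le (show w + 1 ≤ q' from hq') with e | e
        · subst e
          exact absurd (hrun.2.1 (w + 1) (by omega) (by omega)) hqX
        · have := xrun_right_unique hrun (hr e)
          subst this
          right; left; simpa using hSj
    · have e4 := hS (Nat.le_succ s)
      simp only [Nat.succ_eq_add_one] at e4
      by_cases hE1 : XExt S F m D X s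
      · exact ⟨s + 1, by omega, Or.inr ⟨s, rfl, hE1⟩, rfl, base⟩
      · have hc1 : S s - F (s + 1) < m := by omega
        obtain ⟨hS0, hF0⟩ := xhost hS hF hI (by omega : s < D) hX1 hc1 hE1
        obtain ⟨P, q1, q3, q4, q5⟩ := ih (by omega) hX1 hc1 hE1
        refine ⟨P, by omega, q3, by omega, ?_⟩
        intro t h1 h2
        rcases Nat.eq_or_lt_of_le h2 with e | e
        · exact base t (by omega) h2
        · rw [q5 t h1 (by omega)]; omega

/-- Preemptive schedules, recording only the slots of every job. -/
def Sch {n : ℕ} (r d p : Fin n → ℕ) (y : Fin n → Finset ℕ) : Prop :=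
  ∀ i, (∀ t ∈ y i, r i ≤ t ∧ t < d i) ∧ (y i).card = p i

/-- Number of jobs processed in slot `t`. -/
def ld {n : ℕ} (y : Fin n → Finset ℕ) (t : ℕ) : ℕ :=
  (Finset.univ.filter (fun i => t ∈ y i)).card

/-- Exchange arcs. -/
def Arc {n : ℕ} (r d : Fin n → ℕ) (y : Fin n → Finset ℕ) (s z : ℕ) : Prop :=
  ∃ i, s ∈ y i ∧ z ∉ y i ∧ r i ≤ z ∧ z < d i

theorem ld_eq_sum {n : ℕ} (y : Fin n → Finset ℕ) (t : ℕ) :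
    ld y t = ∑ i, if t ∈ y i then 1 else 0 := by
  simp [ld]

theorem arc_step {n : ℕ} {r d p : Fin n → ℕ} {y : Fin n → Finset ℕ} (hy : Sch r d p y)
    {i : Fin n} {a b : ℕ} (ha : a ∈ y i) (hb : b ∉ y i) (h1 : r i ≤ b) (h2 : b < d i) :
    Sch r d p (Function.update y i (insert b ((y i).erase a))) ∧
    ∀ s, ld (Function.update y i (insert b ((y i).erase a))) s + (if s = a then 1 else 0)
      = ld y s + (if s = b then 1 else 0) := by
  constructor
  · intro j
    by_cases hj : j = i
    · subst hj
      simp only [Function.update_self]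
      refine ⟨?_, ?_⟩
      · intro t ht
        simp only [Finset.mem_insert, Finset.mem_erase] at ht
        rcases ht with rfl | ht
        · exact ⟨h1, h2⟩
        · exact (hy j).1 t ht.2
      · rw [Finset.card_insert_of_notMem (by simp [hb]), Finset.card_erase_of_mem ha,
          ← (hy j).2]
        have : 0 < (y j).card := Finset.card_pos.mpr ⟨a, ha⟩
        omega
    · rw [Function.update_of_ne hj]
      exact hy j
  · intro s
    rw [ld_eq_sum, ld_eq_sum, ← Finset.add_sum_erase _ _ (Finset.mem_univ i),
      ← Finset.add_sum_erase (a := i) Finset.univ (fun j => if s ∈ y j then 1 else 0)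
        (Finset.mem_univ i)]
    have e : ∑ x ∈ Finset.univ.erase i,
        (if s ∈ Function.update y i (insert b ((y i).erase a)) x then 1 else 0)
        = ∑ x ∈ Finset.univ.erase i, (if s ∈ y x then 1 else 0) := by
      apply Finset.sum_congr rfl
      intro x hx
      rw [Function.update_of_ne (Finset.ne_of_mem_erase hx)]
    rw [e]
    simp only [Function.update_self, Finset.mem_insert, Finset.mem_erase]
    have hab : a ≠ b := fun h => hb (h ▸ ha)
    by_cases hsa : s = a
    · subst hsa
      simp [ha, hab]
      ring
    · by_cases hsb : s = b
      · subst hsb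
        simp [hb, hsa]
        ring
      · simp [hsa, hsb]

theorem walk_exchange {n : ℕ} {r d p : Fin n → ℕ} (k : ℕ) : ∀ (y : Fin n → Finset ℕ)
    (v : ℕ → ℕ), Sch r d p y → (∀ j < k, Arc r d y (v j) (v (j + 1))) →
    (∀ i j, i < j → j ≤ k → v i ≠ v j) →
    ∃ y', Sch r d p y' ∧
      ∀ s, ld y' s + (if s = v 0 then 1 else 0) = ld y s + (if s = v k then 1 else 0) := by
  induction k with
  | zero => intro y v hy _ _; exact ⟨y, hy, fun s => rfl⟩
  | succ k ih =>
    intro y v hy hv hinj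
    obtain ⟨i, h1, h2, h3, h4⟩ := hv k (by omega)
    obtain ⟨hy', hl⟩ := arc_step hy h1 h2 h3 h4
    have hside : ∀ j < k, Arc r d (Function.update y i (insert (v (k + 1)) ((y i).erase (v k))))
        (v j) (v (j + 1)) := by
      intro j hj
      obtain ⟨i', g1, g2, g3, g4⟩ := hv j (by omega)
      refine ⟨i', ?_, ?_, g3, g4⟩
      · by_cases hi : i' = i
        · subst hi
          simp only [Function.update_self, Finset.mem_insert, Finset.mem_erase]
          exact Or.inr ⟨hinj j k hj (by omega), g1⟩
        · rwa [Function.update_of_ne hi]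
      · by_cases hi : i' = i
        · subst hi
          simp only [Function.update_self, Finset.mem_insert, Finset.mem_erase]
          rintro (h | h)
          · exact hinj (j + 1) (k + 1) (by omega) le_rfl h
          · exact g2 h.2
        · rwa [Function.update_of_ne hi]
    obtain ⟨y2, hy2, hl2⟩ := ih _ v hy' hside (fun a b hab hb => hinj a b hab (by omega))
    refine ⟨y2, hy2, fun s => ?_⟩
    rw [hl2, hl]

theorem exists_walk {α : Type} {R : α → α → Prop} {a b : α} (h : Relation.ReflTransGen R a b) :
    ∃ k, ∃ v : ℕ → α, v 0 = a ∧ v k = b ∧ ∀ j < k, R (v j) (v (j + 1)) := by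
  induction h with
  | refl => exact ⟨0, fun _ => a, rfl, rfl, by simp⟩
  | tail _ hbc ih =>
    rename_i b c _
    obtain ⟨k, v, h0, hk, hv⟩ := ih
    refine ⟨k + 1, fun x => if x ≤ k then v x else c, by simp [h0], by simp, ?_⟩
    intro j hj
    by_cases hjk : j = k
    · subst hjk
      simpa [hk] using hbc
    · have h1 : j ≤ k := by omega
      have h2 : j + 1 ≤ k := by omega
      simp only [h1, h2, if_true]
      exact hv j (by omega)

theorem exists_inj_walk {α : Type} {R : α → α → Prop} {a b : α}
    (h : Relation.ReflTransGen R a b) :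
    ∃ k, ∃ v : ℕ → α, v 0 = a ∧ v k = b ∧ (∀ j < k, R (v j) (v (j + 1))) ∧
      ∀ i j, i < j → j ≤ k → v i ≠ v j := by
  have hex := exists_walk h
  obtain ⟨v, h0, hk, hv⟩ := Nat.find_spec hex
  refine ⟨Nat.find hex, v, h0, hk, hv, ?_⟩
  intro i j hij hj heq
  apply Nat.find_min hex (show Nat.find hex - (j - i) < Nat.find hex by omega)
  generalize Nat.find hex = k at *
  refine ⟨fun x => if x ≤ i then v x else v (x + (j - i)), by simp [h0], ?_, ?_⟩
  · by_cases hki : k - (j - i) ≤ i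
    · have : j = k := by omega
      have h2 : k - (j - i) = i := by omega
      simp only [h2, le_refl, if_true]
      rw [heq, this, hk]
    · simp only [hki, if_false]
      rw [show k - (j - i) + (j - i) = k by omega, hk]
  · intro x hx
    by_cases h1 : x + 1 ≤ i
    · have h2 : x ≤ i := by omega
      simp only [h1, h2, if_true]
      exact hv x (by omega)
    · by_cases h2 : x ≤ i
      · have h3 : x = i := by omega
        subst h3
        simp only [h1, le_refl, if_true, if_false]
        rw [heq, show x + 1 + (j - x) = j + 1 by omega]
        exact hv j (by omega)
      · simp only [h1, h2, if_false]
        rw [show x + 1 + (j - i) = x + (j - i) + 1 by omega]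
        exact hv _ (by omega)

theorem reach_exchange {n : ℕ} {r d p : Fin n → ℕ} {y : Fin n → Finset ℕ} (hy : Sch r d p y)
    {a b : ℕ} (h : Relation.ReflTransGen (Arc r d y) a b) :
    ∃ y', Sch r d p y' ∧
      ∀ s, ld y' s + (if s = a then 1 else 0) = ld y s + (if s = b then 1 else 0) := by
  obtain ⟨k, v, h0, hk, hv, hinj⟩ := exists_inj_walk h
  obtain ⟨y', h1, h2⟩ := walk_exchange k y v hy hv hinj
  rw [h0, hk] at h2
  exact ⟨y', h1, h2⟩

/-- Closedness inequality: no schedule, even fractional, puts less into a closed set. -/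
theorem closed_ineq {n : ℕ} {r d p : Fin n → ℕ} {y : Fin n → Finset ℕ} (hy : Sch r d p y)
    (Y : Finset ℕ)
    (hcl : ∀ i t z, t ∈ Y → t ∈ y i → r i ≤ z → z < d i → z ∉ y i → z ∈ Y)
    (g : Fin n → ℕ → ℝ) (hg : ∀ i t, 0 ≤ g i t ∧ g i t ≤ 1)
    (hgs : ∀ i, ∑ t ∈ Finset.Ico (r i) (d i), g i t = p i) :
    ∑ t ∈ Y, (ld y t : ℝ) ≤
      ∑ t ∈ Y, ∑ i ∈ Finset.univ.filter (fun i => r i ≤ t ∧ t + 1 ≤ d i), g i t := by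
  have e1 : ∑ t ∈ Y, (ld y t : ℝ) = ∑ i, ∑ t ∈ Y, (if t ∈ y i then (1 : ℝ) else 0) := by
    rw [Finset.sum_comm]
    apply Finset.sum_congr rfl
    intro t _
    rw [ld_eq_sum]
    push_cast
    rfl
  have e2 : ∑ t ∈ Y, ∑ i ∈ Finset.univ.filter (fun i => r i ≤ t ∧ t + 1 ≤ d i), g i t
      = ∑ i, ∑ t ∈ Y, (if r i ≤ t ∧ t + 1 ≤ d i then g i t else 0) := by
    rw [Finset.sum_comm]
    apply Finset.sum_congr rfl
    intro t _
    rw [Finset.sum_filter]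
  rw [e1, e2]
  apply Finset.sum_le_sum
  intro i _
  by_cases hex : ∃ t ∈ Y, t ∈ y i
  · obtain ⟨t0, ht0, ht0i⟩ := hex
    -- compare on the window
    have a1 : ∑ t ∈ Y, (if t ∈ y i then (1 : ℝ) else 0)
        = ∑ t ∈ Finset.Ico (r i) (d i), (if t ∈ Y then (if t ∈ y i then (1 : ℝ) else 0) else 0) := by
      rw [← Finset.sum_filter, ← Finset.sum_filter, ← Finset.sum_filter]
      apply Finset.sum_congr _ (fun _ _ => rfl)
      ext t
      simp only [Finset.mem_filter, Finset.mem_Ico]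
      constructor
      · rintro ⟨h1, h2⟩
        exact ⟨⟨(hy i).1 t h2, h1⟩, h2⟩
      · rintro ⟨⟨_, h1⟩, h2⟩
        exact ⟨h1, h2⟩
    have a2 : ∑ t ∈ Y, (if r i ≤ t ∧ t + 1 ≤ d i then g i t else 0)
        = ∑ t ∈ Finset.Ico (r i) (d i), (if t ∈ Y then g i t else 0) := by
      rw [← Finset.sum_filter, ← Finset.sum_filter]
      apply Finset.sum_congr _ (fun _ _ => rfl)
      ext t
      simp only [Finset.mem_filter, Finset.mem_Ico]
      constructor
      · rintro ⟨h1, h2, h3⟩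
        exact ⟨⟨h2, h3⟩, h1⟩
      · rintro ⟨⟨h2, h3⟩, h1⟩
        exact ⟨h1, h2, h3⟩
    rw [a1, a2]
    have a3 : ∑ t ∈ Finset.Ico (r i) (d i), (if t ∈ y i then (1 : ℝ) else 0) = p i := by
      rw [← Finset.sum_filter]
      have : (Finset.Ico (r i) (d i)).filter (fun t => t ∈ y i) = y i := by
        ext t
        simp only [Finset.mem_filter, Finset.mem_Ico]
        exact ⟨fun h => h.2, fun h => ⟨(hy i).1 t h, h⟩⟩
      rw [this]
      simp [(hy i).2]
    have a4 : ∑ t ∈ Finset.Ico (r i) (d i), ((if t ∈ y i then (1 : ℝ) else 0) - g i t) = 0 := by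
      rw [Finset.sum_sub_distrib, a3, hgs]; ring
    have a5 : ∑ t ∈ Finset.Ico (r i) (d i),
        ((if t ∈ Y then (if t ∈ y i then (1 : ℝ) else 0) else 0) - (if t ∈ Y then g i t else 0))
        ≤ ∑ t ∈ Finset.Ico (r i) (d i), ((if t ∈ y i then (1 : ℝ) else 0) - g i t) := by
      apply Finset.sum_le_sum
      intro t ht
      rw [Finset.mem_Ico] at ht
      by_cases htY : t ∈ Y
      · simp [htY]
      · have : t ∈ y i := by
          by_contra h
          exact htY (hcl i t0 t ht0 ht0i ht.1 ht.2 h)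
        simp only [htY, this, if_true, if_false]
        linarith [(hg i t).2]
    rw [a4, Finset.sum_sub_distrib] at a5
    linarith
  · push Not at hex
    have : ∑ t ∈ Y, (if t ∈ y i then (1 : ℝ) else 0) = 0 := by
      apply Finset.sum_eq_zero
      intro t ht
      simp [hex t ht]
    rw [this]
    apply Finset.sum_nonneg
    intro t _
    split_ifs
    · exact (hg i t).1
    · exact le_rfl

theorem exists_min_nat {α : Type} (P : α → Prop) (f : α → ℕ) (h : ∃ a, P a) :
    ∃ a, P a ∧ ∀ b, P b → f a ≤ f b := by
  have hex : ∃ k, ∃ a, P a ∧ f a = k := by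
    obtain ⟨a, ha⟩ := h
    exact ⟨f a, a, ha, rfl⟩
  obtain ⟨a, ha, hk⟩ := Nat.find_spec hex
  refine ⟨a, ha, fun b hb => ?_⟩
  rw [hk]
  exact Nat.find_min' hex ⟨b, hb, rfl⟩

/-- Overflow of a schedule above the capacities. -/
def ovf {n : ℕ} (D : ℕ) (cap : ℕ → ℤ) (y : Fin n → Finset ℕ) : ℕ :=
  ∑ t ∈ Finset.range D, ((ld y t : ℤ) - cap t).toNat

theorem core {n : ℕ} {r d p : Fin n → ℕ} (m D : ℕ) (S F : ℕ → ℤ) (hS : Monotone S)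
    (hF : Monotone F) (hc0 : ∀ t < D, 0 ≤ S t - F (t + 1))
    (hcm : ∀ t < D, S t - F (t + 1) ≤ m) (hd : ∀ i, d i ≤ D)
    (HK : ∀ a b, a < b → b ≤ D → ∃ y, Sch r d p y ∧
      ∀ t, a ≤ t → t < b → (ld y t : ℤ) ≤ S b - F a)
    (hex : ∃ y, Sch r d p y)
    (g : Fin n → ℕ → ℝ) (hg : ∀ i t, 0 ≤ g i t ∧ g i t ≤ 1)
    (hgs : ∀ i, ∑ t ∈ Finset.Ico (r i) (d i), g i t = p i)
    (mt : ℕ → ℝ)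
    (hmt1 : ∀ t < D, ∑ i ∈ Finset.univ.filter (fun i => r i ≤ t ∧ t + 1 ≤ d i), g i t ≤ mt t)
    (hmt2 : ∀ t < D, mt t ≤ m)
    (hmt3 : ∀ t < D, mt t < ((S t - F (t + 1) : ℤ) : ℝ) + 1) :
    ∃ X : Finset ℕ, (∀ t ∈ X, t < D) ∧ (∀ t ∈ X, S t - F (t + 1) < m) ∧ XInv S F X ∧
      ∃ y, Sch r d p y ∧ (∀ t ∈ X, 1 ≤ ld y t) ∧
        ∀ t < D, (ld y t : ℤ) ≤ S t - F (t + 1) + (if t ∈ X then 1 else 0) := by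
  obtain ⟨X, ⟨hXD, hXm, hXI, hXy⟩, hmax⟩ := exists_min_nat
    (fun X : Finset ℕ => (∀ t ∈ X, t < D) ∧ (∀ t ∈ X, S t - F (t + 1) < m) ∧ XInv S F X ∧
      ∃ y, Sch r d p y ∧ (∀ t ∈ X, 1 ≤ ld y t)) (fun X => D - X.card)
    (by
      refine ⟨∅, by simp, by simp, ?_, ?_⟩
      · rintro a b ⟨h1, h2, _⟩
        exact absurd (h2 a le_rfl h1) (by simp)
      · obtain ⟨y, hy⟩ := hex
        exact ⟨y, hy, by simp⟩)
  refine ⟨X, hXD, hXm, hXI, ?_⟩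
  have hcard : ∀ X' : Finset ℕ, (∀ t ∈ X', t < D) → X'.card ≤ D := by
    intro X' h
    have : X' ⊆ Finset.range D := fun t ht => Finset.mem_range.mpr (h t ht)
    simpa using Finset.card_le_card this
  -- extension contradicts maximality
  have hnoext : ∀ z y, XExt S F m D X z → Sch r d p y → (∀ t ∈ X, 1 ≤ ld y t) →
      1 ≤ ld y z → False := by
    intro z y hE hy hb hz
    have hI' : ∀ t ∈ insert z X, t < D := by
      intro t ht
      rcases Finset.mem_insert.mp ht with rfl | h
      · exact hE.1
      · exact hXD t h
    have h1 := hmax (insert z X) ⟨hI', ?_, hE.2.2.2, y, hy, ?_⟩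
    · have h2 := hcard _ hI'
      rw [Finset.card_insert_of_notMem hE.2.1] at h1 h2
      omega
    · intro t ht
      rcases Finset.mem_insert.mp ht with rfl | h
      · exact hE.2.2.1
      · exact hXm t h
    · intro t ht
      rcases Finset.mem_insert.mp ht with rfl | h
      · exact hz
      · exact hb t h
  set cap : ℕ → ℤ := fun t => S t - F (t + 1) + (if t ∈ X then 1 else 0) with hcap
  obtain ⟨u, ⟨hu, hub⟩, humin⟩ := exists_min_nat
    (fun y => Sch r d p y ∧ (∀ t ∈ X, 1 ≤ ld y t)) (ovf D cap) hXy
  refine ⟨u, hu, hub, ?_⟩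
  by_contra hcon
  push Not at hcon
  obtain ⟨t0, ht0D, ht0⟩ := hcon
  change cap t0 < ld u t0 at ht0
  have hcap0 : ∀ t < D, (if t ∈ X then 1 else 0) ≤ cap t := by
    intro t ht
    have := hc0 t ht
    simp only [hcap]
    omega
  have ht0pos : 1 ≤ ld u t0 := by
    have := hcap0 t0 ht0D
    split_ifs at this <;> omega
  -- reachable slots
  have hreachD : ∀ z, Relation.ReflTransGen (Arc r d u) t0 z → z < D := by
    intro z hz
    induction hz with
    | refl => exact ht0D
    | tail _ h _ =>
      obtain ⟨i, _, _, _, h⟩ := h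
      exact lt_of_lt_of_le h (hd i)
  have hbusy : ∀ (z : ℕ) (y : Fin n → Finset ℕ), z ≠ t0 → (∀ s, ld y s + (if s = t0 then 1 else 0)
      = ld u s + (if s = z then 1 else 0)) → ∀ t ∈ X, 1 ≤ ld y t := by
    intro z y hz hy t ht
    have h1 := hy t
    have h2 := hub t ht
    by_cases htt : t = t0
    · subst htt
      have h3 := hcap0 t ht0D
      rw [if_pos ht] at h3
      rw [if_pos rfl, if_neg (Ne.symm hz)] at h1
      omega
    · rw [if_neg htt] at h1
      omega
  have hfull : ∀ z, Relation.ReflTransGen (Arc r d u) t0 z → cap z ≤ ld u z := by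
    intro z hz
    by_cases hzt : z = t0
    · subst hzt; exact ht0.le
    by_contra hlt
    push Not at hlt
    obtain ⟨y, hy, hyl⟩ := reach_exchange hu hz
    have h1 := humin y ⟨hy, hbusy z y hzt hyl⟩
    have h2 : ovf D cap y < ovf D cap u := by
      apply Finset.sum_lt_sum
      · intro s hs
        have h3 := hyl s
        by_cases hst : s = t0
        · subst hst
          rw [if_pos rfl, if_neg (Ne.symm hzt)] at h3
          omega
        · by_cases hsz : s = z
          · subst hsz
            rw [if_neg hst, if_pos rfl] at h3
            omega
          · rw [if_neg hst, if_neg hsz] at h3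
            omega
      · refine ⟨t0, Finset.mem_range.mpr ht0D, ?_⟩
        have h3 := hyl t0
        rw [if_pos rfl, if_neg (Ne.symm hzt)] at h3
        omega
    omega
  have hnotE : ∀ z, Relation.ReflTransGen (Arc r d u) t0 z → ¬ XExt S F m D X z := by
    intro z hz hE
    by_cases hzt : z = t0
    · subst hzt
      exact hnoext z u hE hu hub ht0pos
    obtain ⟨y, hy, hyl⟩ := reach_exchange hu hz
    apply hnoext z y hE hy (hbusy z y hzt hyl)
    have := hyl z
    rw [if_pos rfl, if_neg hzt] at this
    omega
  have hcl : ∀ i t z, Relation.ReflTransGen (Arc r d u) t0 t → t ∈ u i → r i ≤ z → z < d i →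
      z ∉ u i → Relation.ReflTransGen (Arc r d u) t0 z := by
    intro i t z ht hti h1 h2 h3
    exact ht.tail ⟨i, hti, h3, h1, h2⟩
  have hwin : ∀ i t z, Relation.ReflTransGen (Arc r d u) t0 t → t ∈ u i → r i ≤ z → z < d i →
      ¬ XExt S F m D X z := by
    intro i t z ht hti h1 h2
    by_cases h3 : z ∈ u i
    · intro hE
      apply hnoext z u hE hu hub
      exact Finset.card_pos.mpr ⟨i, by simp [h3]⟩
    · exact hnotE z (hcl i t z ht hti h1 h2 h3)
  have hbet : ∀ z, Relation.ReflTransGen (Arc r d u) t0 z → ∀ s,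
      (t0 ≤ s ∧ s ≤ z ∨ z ≤ s ∧ s ≤ t0) → ¬ XExt S F m D X s := by
    intro z hz
    induction hz with
    | refl =>
      intro s hs
      have : s = t0 := by omega
      subst this
      exact hnotE _ Relation.ReflTransGen.refl
    | tail hab hbc ih =>
      rename_i b c
      intro s hs
      obtain ⟨i, g1, g2, g3, g4⟩ := hbc
      have hw := (hu i).1 b g1
      by_cases hin : t0 ≤ s ∧ s ≤ b ∨ b ≤ s ∧ s ≤ t0
      · exact ih s hin
      · exact hwin i b s hab g1 (by omega) (by omega)
  set Y : Finset ℕ := (Finset.range D).filter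
    (fun z => Relation.ReflTransGen (Arc r d u) t0 z) with hY
  have hYmem : ∀ z, z ∈ Y ↔ Relation.ReflTransGen (Arc r d u) t0 z := by
    intro z
    simp only [hY, Finset.mem_filter, Finset.mem_range]
    exact ⟨fun h => h.2, fun h => ⟨hreachD z h, h⟩⟩
  have ht0Y : t0 ∈ Y := (hYmem t0).mpr Relation.ReflTransGen.refl
  have hsum : ∑ t ∈ Y, ((cap t : ℤ) : ℝ) < ∑ t ∈ Y, (ld u t : ℝ) := by
    apply Finset.sum_lt_sum
    · intro t ht
      exact_mod_cast hfull t ((hYmem t).mp ht)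
    · exact ⟨t0, ht0Y, by exact_mod_cast ht0⟩
  have hclY : ∀ i t z, t ∈ Y → t ∈ u i → r i ≤ z → z < d i → z ∉ u i → z ∈ Y := by
    intro i t z ht h1 h2 h3 h4
    exact (hYmem z).mpr (hcl i t z ((hYmem t).mp ht) h1 h2 h3 h4)
  by_cases hA : ∀ t ∈ Y, t ∈ X ∨ S t - F (t + 1) = m
  · have h1 := closed_ineq hu Y hclY g hg hgs
    have h2 : ∑ t ∈ Y, ∑ i ∈ Finset.univ.filter (fun i => r i ≤ t ∧ t + 1 ≤ d i), g i t
        ≤ ∑ t ∈ Y, ((cap t : ℤ) : ℝ) := by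
      apply Finset.sum_le_sum
      intro t ht
      have htD := hreachD t ((hYmem t).mp ht)
      have h3 := hmt1 t htD
      have h4 := hmt2 t htD
      have h5 := hmt3 t htD
      rcases hA t ht with h | h
      · simp only [hcap, if_pos h]
        push_cast at h5 ⊢
        linarith
      · have h6 : (m : ℤ) ≤ cap t := by
          simp only [hcap]
          split_ifs <;> omega
        have h7 : (m : ℝ) ≤ ((cap t : ℤ) : ℝ) := by exact_mod_cast h6
        linarith
    linarith
  · push Not at hA
    obtain ⟨z0, hz0Y, hz0X, hz0m⟩ := hA
    have hz0r := (hYmem z0).mp hz0Y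
    have hz0D := hreachD z0 hz0r
    have hz0m' : S z0 - F (z0 + 1) < m := lt_of_le_of_ne (hcm z0 hz0D) hz0m
    obtain ⟨Q, q1, q2, q3, q4, q5⟩ := xright hS hF hXI hXD (D - z0) z0 (by omega) hz0D hz0X hz0m'
      (hnotE z0 hz0r)
    obtain ⟨P, p1, p3, p4, p5⟩ := xleft hS hF hXI z0 hz0D hz0X hz0m' (hnotE z0 hz0r)
    have hYPQ : ∀ z ∈ Y, P ≤ z ∧ z < Q := by
      intro z hz
      have hzr := (hYmem z).mp hz
      have hzD := hreachD z hzr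
      constructor
      · by_contra hlt
        rcases p3 with h | ⟨w, hw, hE⟩
        · omega
        · by_cases hin : t0 ≤ w
          · exact hbet z0 hz0r w (by omega) hE
          · exact hbet z hzr w (by omega) hE
      · by_contra hlt
        rcases q3 with h | hE
        · omega
        · by_cases hin : t0 ≤ Q
          · exact hbet z hzr Q (by omega) hE
          · exact hbet z0 hz0r Q (by omega) hE
    have hlev : ∀ t ∈ Y, cap t = S z0 - F z0 := by
      intro t ht
      obtain ⟨h1, h2⟩ := hYPQ t ht
      by_cases h3 : t ≤ z0
      · exact p5 t h1 h3
      · exact q5 t (by omega) h2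
    obtain ⟨y, hy, hyl⟩ := HK P Q (by omega) q2
    have h1 := closed_ineq hu Y hclY (fun i t => if t ∈ y i then 1 else 0)
      (by intro i t; split_ifs <;> simp)
      (by
        intro i
        rw [← Finset.sum_filter]
        have : (Finset.Ico (r i) (d i)).filter (fun t => t ∈ y i) = y i := by
          ext t
          simp only [Finset.mem_filter, Finset.mem_Ico]
          exact ⟨fun h => h.2, fun h => ⟨(hy i).1 t h, h⟩⟩
        rw [this]
        simp [(hy i).2])
    have h2 : ∑ t ∈ Y, ∑ i ∈ Finset.univ.filter (fun i => r i ≤ t ∧ t + 1 ≤ d i),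
        (if t ∈ y i then (1 : ℝ) else 0) ≤ ∑ t ∈ Y, ((cap t : ℤ) : ℝ) := by
      apply Finset.sum_le_sum
      intro t ht
      obtain ⟨h3, h4⟩ := hYPQ t ht
      have h5 : ∑ i ∈ Finset.univ.filter (fun i => r i ≤ t ∧ t + 1 ≤ d i),
          (if t ∈ y i then (1 : ℝ) else 0) ≤ ld y t := by
        rw [ld_eq_sum]
        push_cast
        apply Finset.sum_le_sum_of_subset_of_nonneg (Finset.filter_subset _ _)
        intro i _ _
        split_ifs <;> simp
      have h6 := hyl t h3 h4
      rw [q4, p4, ← hlev t ht] at h6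
      have h7 : (ld y t : ℝ) ≤ ((cap t : ℤ) : ℝ) := by exact_mod_cast h6
      linarith
    linarith

/-- Value at the previous slot, `0` before the first slot. -/
def pv (c : ℕ → ℤ) : ℕ → ℤ
  | 0 => 0
  | t + 1 => c t

theorem vbound (D : ℕ) (S F : ℕ → ℤ) (hS : Monotone S) (hF : Monotone F) (hS0 : 0 ≤ S 0)
    (hF0 : F 0 = 0) (hFS : F D ≤ S D) (X : Finset ℕ) (hX : ∀ t ∈ X, t < D) (hI : XInv S F X)
    (c : ℕ → ℤ) (hc : ∀ t, c t = S t - F (t + 1) + (if t ∈ X then 1 else 0)) :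
    ∑ t ∈ Finset.range D, max (c t - pv c t) 0 ≤ 2 * S D := by
  set V : ℕ → ℤ := fun T => ∑ t ∈ Finset.range T, max (c t - pv c t) 0 with hV
  set x : ℕ → ℤ := fun t => if t ∈ X then 1 else 0 with hx
  have hVs : ∀ t, V (t + 1) = V t + max (c t - pv c t) 0 := by
    intro t
    simp only [hV, Finset.sum_range_succ]
  have hSp : ∀ t, pv S t ≤ S t := by
    intro t
    cases t with
    | zero => exact hS0
    | succ t => exact hS (Nat.le_succ t)
  have hdiff : ∀ t, c t - pv c t = (S t - pv S t) - (F (t + 1) - F t) + (x t - pv x t) := by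
    intro t
    cases t with
    | zero => simp only [pv, hc, hx, hF0]; ring
    | succ t => simp only [pv, hc, hx]; ring
  have hx1 : ∀ t, t ∈ X → x t = 1 := fun t ht => by simp only [hx, if_pos ht]
  have hx0 : ∀ t, t ∉ X → x t = 0 := fun t ht => by simp only [hx, if_neg ht]
  have hpx0 : ∀ t, (∀ s, s + 1 = t → s ∉ X) → pv x t = 0 := by
    intro t ht
    cases t with
    | zero => rfl
    | succ t => exact hx0 t (ht t rfl)
  have hpx1 : ∀ t, pv x t ≤ 1 ∧ 0 ≤ pv x t := by
    intro t
    cases t with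
    | zero => simp [pv]
    | succ t => simp only [pv, hx]; split_ifs <;> simp
  have key : ∀ t, ((∀ s, s + 1 = t → s ∉ X) → 2 * V t ≤ 2 * pv S t + S t + F t) ∧
      (∀ p, p < t → (∀ u, p ≤ u → u < t → u ∈ X) → (∀ s, s + 1 = p → s ∉ X) →
        2 * V t ≤ 2 * pv S t + S p + F p + 2 ∧
        (F p < F (p + 1) → 2 * V t ≤ 2 * pv S t + S p + F p)) := by
    intro t
    induction t with
    | zero =>
      refine ⟨fun _ => ?_, fun p hp => absurd hp (by omega)⟩
      simp only [hV, pv, hF0, Finset.range_zero, Finset.sum_empty]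
      omega
    | succ t ih =>
      obtain ⟨ih1, ih2⟩ := ih
      have a1 := hVs t
      have a2 := hdiff t
      have a3 := hSp t
      have a4 := hF (Nat.le_succ t)
      have a5 := hS (Nat.le_succ t)
      simp only [Nat.succ_eq_add_one] at a4 a5
      have a6 := hpx1 t
      rw [show pv S (t + 1) = S t from rfl]
      constructor
      · intro h
        have htX := h t rfl
        have b1 := hx0 t htX
        by_cases hb : ∀ s, s + 1 = t → s ∉ X
        · have b2 := ih1 hb
          omega
        · push Not at hb
          obtain ⟨s, hs, hsX⟩ := hb
          subst hs
          obtain ⟨p, hrun⟩ := xrun_exists_left X s htX hsX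
          obtain ⟨b2, b3⟩ := ih2 p hrun.1 hrun.2.1 hrun.2.2.1
          have b4 : pv x (s + 1) = 1 := hx1 s hsX
          have b5 : pv S (s + 1) = S s := rfl
          have b6 := hS hrun.1.le
          have b7 := hF hrun.1.le
          rcases hI _ _ hrun with g | g | g
          · omega
          · simp only [Nat.add_sub_cancel] at g
            omega
          · have := b3 g
            omega
      · intro p hp hpX hpb
        have htX : t ∈ X := hpX t (by omega) (by omega)
        have b1 := hx1 t htX
        rcases Nat.eq_or_lt_of_le (show p ≤ t by omega) with e | e
        · subst e
          have b2 := ih1 hpb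
          constructor
          · omega
          · intro h; omega
        · obtain ⟨s, rfl⟩ : ∃ s, t = s + 1 := ⟨t - 1, by omega⟩
          have b4 : pv x (s + 1) = 1 := hx1 s (hpX s (by omega) (by omega))
          obtain ⟨b2, b3⟩ := ih2 p e (fun u h1 h2 => hpX u h1 (by omega)) hpb
          constructor
          · omega
          · intro h
            have := b3 h
            omega
  have hDX : D ∉ X := fun h => absurd (hX D h) (by omega)
  obtain ⟨k1, k2⟩ := key D
  have a3 := hSp D
  change V D ≤ _
  by_cases hb : ∀ s, s + 1 = D → s ∉ X
  · have := k1 hb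
    omega
  · push Not at hb
    obtain ⟨s, hs, hsX⟩ := hb
    subst hs
    obtain ⟨p, hrun⟩ := xrun_exists_left X s hDX hsX
    obtain ⟨b2, b3⟩ := k2 p hrun.1 hrun.2.1 hrun.2.2.1
    have b5 : pv S (s + 1) = S s := rfl
    have b6 := hS hrun.1.le
    have b7 := hF hrun.1.le
    rcases hI _ _ hrun with g | g | g
    · omega
    · simp only [Nat.add_sub_cancel] at g
      omega
    · have := b3 g
      omega

theorem card_fin_le (m : ℕ) (a b : ℤ) :
    ((Finset.univ.filter (fun k : Fin m => a ≤ (k : ℤ) ∧ (k : ℤ) < b)).card : ℤ)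
      ≤ max (b - a) 0 := by
  have h : (Finset.univ.filter (fun k : Fin m => a ≤ (k : ℤ) ∧ (k : ℤ) < b)).card
      ≤ (Finset.Ico a b).card := by
    apply Finset.card_le_card_of_injOn (fun k : Fin m => ((k : ℕ) : ℤ))
    · intro k hk
      simpa using hk
    · intro k _ k' _ h
      apply Fin.ext
      dsimp only at h
      exact_mod_cast h
  rw [Int.card_Ico] at h
  omega

theorem machines {n m D : ℕ} (jobs : Fin n → Job) (hspan : ∀ i, (jobs i).d ≤ D)
    (y : Fin n → Finset ℕ)
    (hy : Sch (fun i => (jobs i).r) (fun i => (jobs i).d) (fun i => (jobs i).p) y)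
    (c : ℕ → ℤ) (hc0 : ∀ t < D, 0 ≤ c t) (hcm : ∀ t < D, c t ≤ m)
    (hl : ∀ t < D, (ld y t : ℤ) ≤ c t) :
    ∃ (A : Fin m → Finset ℕ) (σ : Fin m → ℕ → Option (Fin n)), MFeasible jobs A σ ∧
      ∑ k, ((A k).card : ℤ) ≤ ∑ t ∈ Finset.range D, c t ∧
      ∑ k, (runs (A k) : ℤ) ≤ ∑ t ∈ Finset.range D, max (c t - pv c t) 0 := by
  set L : ℕ → List (Fin n) := fun t => (Finset.univ.filter (fun i => t ∈ y i)).toList with hL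
  have hLlen : ∀ t, (L t).length = ld y t := fun t => by simp [hL, ld]
  have hLmem : ∀ t i, i ∈ L t ↔ t ∈ y i := fun t i => by simp [hL]
  have hLnd : ∀ t, (L t).Nodup := fun t => Finset.nodup_toList _
  have hyD : ∀ t i, t ∈ y i → t < D := fun t i h => lt_of_lt_of_le ((hy i).1 t h).2 (hspan i)
  set A : Fin m → Finset ℕ := fun k => (Finset.range D).filter (fun t => (k : ℤ) < c t) with hA
  set σ : Fin m → ℕ → Option (Fin n) := fun k t => (L t)[(k : ℕ)]? with hσ
  have hσs : ∀ k t i, σ k t = some i → t ∈ y i ∧ t ∈ A k := by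
    intro k t i h
    simp only [hσ] at h
    have h1 : i ∈ L t := List.mem_of_getElem? h
    rw [hLmem] at h1
    have h2 : (k : ℕ) < (L t).length := by
      rw [List.getElem?_eq_some_iff] at h
      exact h.1
    rw [hLlen] at h2
    have h3 := hyD t i h1
    have h4 := hl t h3
    refine ⟨h1, ?_⟩
    simp only [hA, Finset.mem_filter, Finset.mem_range]
    exact ⟨h3, by omega⟩
  refine ⟨A, σ, ⟨?_, ?_, ?_, ?_⟩, ?_, ?_⟩
  · intro k t h
    obtain ⟨i, hi⟩ := Option.isSome_iff_exists.mp h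
    exact (hσs k t i hi).2
  · intro k t i h
    exact (hy i).1 t (hσs k t i h).1
  · intro k k' t i h h'
    simp only [hσ] at h h'
    rw [List.getElem?_eq_some_iff] at h h'
    obtain ⟨a1, a2⟩ := h
    obtain ⟨b1, b2⟩ := h'
    apply Fin.ext
    exact ((hLnd t).getElem_inj_iff).mp (a2.trans b2.symm)
  · intro i
    rw [show (jobs i).p = (y i).card from (hy i).2.symm, ← Finset.card_biUnion]
    · congr 1
      ext t
      simp only [Finset.mem_biUnion, Finset.mem_univ, true_and, Finset.mem_filter]
      constructor
      · rintro ⟨k, _, h⟩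
        exact (hσs k t i h).1
      · intro h
        have h1 := (hLmem t i).mpr h
        obtain ⟨j, hj, hji⟩ := List.mem_iff_getElem.mp h1
        have h2 : j < ld y t := by rw [← hLlen]; exact hj
        have h3 := hyD t i h
        have h4 := hl t h3
        have h5 := hcm t h3
        have h6 : σ ⟨j, by omega⟩ t = some i := by
          simp only [hσ]
          rw [List.getElem?_eq_some_iff]
          exact ⟨hj, hji⟩
        exact ⟨⟨j, by omega⟩, (hσs _ _ _ h6).2, h6⟩
    · intro k _ k' _ hkk
      rw [Function.onFun, Finset.disjoint_left]
      intro t h h'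
      simp only [Finset.mem_filter] at h h'
      apply hkk
      have h := h.2
      have h' := h'.2
      simp only [hσ] at h h'
      rw [List.getElem?_eq_some_iff] at h h'
      obtain ⟨a1, a2⟩ := h
      obtain ⟨b1, b2⟩ := h'
      apply Fin.ext
      exact ((hLnd t).getElem_inj_iff).mp (a2.trans b2.symm)
  · have e : ∑ k, ((A k).card : ℤ) = ∑ t ∈ Finset.range D,
        ((Finset.univ.filter (fun k : Fin m => (k : ℤ) < c t)).card : ℤ) := by
      simp only [hA, Finset.card_filter]
      push_cast
      rw [Finset.sum_comm]
    rw [e]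
    apply Finset.sum_le_sum
    intro t ht
    have h1 := card_fin_le m 0 (c t)
    have h2 := hc0 t (Finset.mem_range.mp ht)
    have h3 : (Finset.univ.filter (fun k : Fin m => (k : ℤ) < c t))
        = (Finset.univ.filter (fun k : Fin m => (0 : ℤ) ≤ (k : ℤ) ∧ (k : ℤ) < c t)) := by
      ext k; simp
    rw [h3]
    omega
  · have e : ∀ k, (runs (A k) : ℤ) ≤ ∑ t ∈ Finset.range D,
        (if pv c t ≤ (k : ℤ) ∧ (k : ℤ) < c t then 1 else 0) := by
      intro k
      rw [← Finset.sum_filter]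
      simp only [Finset.sum_const, nsmul_eq_mul, mul_one, runs]
      norm_cast
      apply Finset.card_le_card
      intro t ht
      simp only [hA, Finset.mem_filter, Finset.mem_range] at ht ⊢
      obtain ⟨⟨h1, h2⟩, h3⟩ := ht
      refine ⟨h1, ?_, h2⟩
      cases t with
      | zero => simp [pv]
      | succ s =>
        simp only [pv]
        by_contra h
        exact h3 s ⟨by omega, by omega⟩ rfl
    calc ∑ k, (runs (A k) : ℤ) ≤ ∑ k : Fin m, ∑ t ∈ Finset.range D,
        (if pv c t ≤ (k : ℤ) ∧ (k : ℤ) < c t then (1 : ℤ) else 0) :=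
          Finset.sum_le_sum (fun k _ => e k)
      _ = ∑ t ∈ Finset.range D, ((Finset.univ.filter
            (fun k : Fin m => pv c t ≤ (k : ℤ) ∧ (k : ℤ) < c t)).card : ℤ) := by
          rw [Finset.sum_comm]
          simp
      _ ≤ _ := Finset.sum_le_sum (fun t _ => card_fin_le m _ _)

theorem sch_of_mfeasible {n m : ℕ} (jobs : Fin n → Job) (A : Fin m → Finset ℕ)
    (σ : Fin m → ℕ → Option (Fin n)) (h : MFeasible jobs A σ) :
    ∃ y, Sch (fun i => (jobs i).r) (fun i => (jobs i).d) (fun i => (jobs i).p) y ∧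
      ∀ t, ld y t ≤ activeCount A t := by
  obtain ⟨h1, h2, h3, h4⟩ := h
  refine ⟨fun i => Finset.univ.biUnion (fun k => (A k).filter (fun t => σ k t = some i)), ?_, ?_⟩
  · intro i
    refine ⟨?_, ?_⟩
    · intro t ht
      simp only [Finset.mem_biUnion, Finset.mem_univ, true_and, Finset.mem_filter] at ht
      obtain ⟨k, _, hk⟩ := ht
      exact h2 k t i hk
    · dsimp only
      rw [← h4 i]
      apply Finset.card_biUnion
      intro k _ k' _ hkk
      rw [Function.onFun, Finset.disjoint_left]
      intro t ht ht'
      simp only [Finset.mem_filter] at ht ht'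
      exact hkk (h3 k k' t i ht.2 ht'.2)
  · intro t
    unfold ld activeCount
    rw [← Finset.card_image_of_injective _ (Option.some_injective (Fin n))]
    refine le_trans (Finset.card_le_card ?_) (Finset.card_image_le
      (s := Finset.univ.filter (fun k : Fin m => t ∈ A k)) (f := fun k => σ k t))
    intro o ho
    simp only [Finset.mem_image, Finset.mem_filter, Finset.mem_univ, true_and,
      Finset.mem_biUnion] at ho ⊢
    obtain ⟨i, ⟨k, hk1, hk2⟩, rfl⟩ := ho
    exact ⟨k, hk1, hk2⟩

theorem floor_mono_shift (a : ℝ) : Monotone (fun θ : ℝ => ((⌊a + θ⌋ : ℤ) : ℝ)) := by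
  intro x y hxy
  have : ⌊a + x⌋ ≤ ⌊a + y⌋ := Int.floor_mono (by linarith)
  exact Int.cast_le.mpr this

theorem floor_shift_int (a : ℝ) :
    IntervalIntegrable (fun θ : ℝ => ((⌊a + θ⌋ : ℤ) : ℝ)) MeasureTheory.volume 0 1 :=
  (floor_mono_shift a).intervalIntegrable

theorem fract_int : ∫ θ in (0 : ℝ)..1, Int.fract θ = 1 / 2 := by
  have h : ∫ θ in (0 : ℝ)..1, Int.fract θ = ∫ θ in (0 : ℝ)..1, θ := by
    rw [intervalIntegral.integral_of_le zero_le_one, intervalIntegral.integral_of_le zero_le_one,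
      MeasureTheory.integral_Ioc_eq_integral_Ioo, MeasureTheory.integral_Ioc_eq_integral_Ioo]
    apply MeasureTheory.setIntegral_congr_fun measurableSet_Ioo
    intro x hx
    exact Int.fract_eq_self.mpr ⟨hx.1.le, hx.2⟩
  rw [h, integral_id]
  norm_num

theorem floor_shift_integral (a : ℝ) : ∫ θ in (0 : ℝ)..1, ((⌊a + θ⌋ : ℤ) : ℝ) = a := by
  have hper : Function.Periodic (Int.fract : ℝ → ℝ) 1 := fun x => Int.fract_add_one x
  have h1 : ∫ θ in (0 : ℝ)..1, Int.fract (a + θ) = 1 / 2 := by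
    rw [intervalIntegral.integral_comp_add_left (fun x => Int.fract x) a]
    have h := hper.intervalIntegral_add_eq a 0
    rw [zero_add, fract_int] at h
    rw [add_zero]
    exact h
  have h2 : ∀ θ : ℝ, ((⌊a + θ⌋ : ℤ) : ℝ) = (a + θ) - Int.fract (a + θ) := by
    intro θ
    have := Int.floor_add_fract (a + θ)
    linarith
  have hi : IntervalIntegrable (fun θ : ℝ => Int.fract (a + θ)) MeasureTheory.volume 0 1 := by
    have : (fun θ : ℝ => Int.fract (a + θ)) = fun θ => (a + θ) - ((⌊a + θ⌋ : ℤ) : ℝ) := by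
      funext θ
      rw [h2]; ring
    rw [this]
    exact (Continuous.intervalIntegrable (by fun_prop) _ _).sub (floor_shift_int a)
  have h3 : ∫ θ in (0 : ℝ)..1, (a + θ) = a + 1 / 2 := by
    rw [intervalIntegral.integral_add (by simp) (Continuous.intervalIntegrable (by fun_prop) _ _),
      integral_id]
    norm_num
  simp_rw [h2]
  rw [intervalIntegral.integral_sub (Continuous.intervalIntegrable (by fun_prop) _ _) hi, h1, h3]
  ring

theorem exists_theta (D : ℕ) (S F : ℕ → ℝ) (w : ℝ) :
    ∃ θ : ℝ, 0 ≤ θ ∧ θ < 1 ∧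
      ∑ t ∈ Finset.range D, (((⌊S t + θ⌋ : ℤ) : ℝ) - ((⌊F (t + 1) + θ⌋ : ℤ) : ℝ))
        + w * ((⌊S D + θ⌋ : ℤ) : ℝ)
      ≤ ∑ t ∈ Finset.range D, (S t - F (t + 1)) + w * S D := by
  set G : ℝ → ℝ := fun θ =>
    ∑ t ∈ Finset.range D, (((⌊S t + θ⌋ : ℤ) : ℝ) - ((⌊F (t + 1) + θ⌋ : ℤ) : ℝ))
        + w * ((⌊S D + θ⌋ : ℤ) : ℝ) with hG
  have i1 : ∀ t ∈ Finset.range D, IntervalIntegrable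
      (fun θ : ℝ => ((⌊S t + θ⌋ : ℤ) : ℝ) - ((⌊F (t + 1) + θ⌋ : ℤ) : ℝ))
      MeasureTheory.volume 0 1 := fun t _ => (floor_shift_int _).sub (floor_shift_int _)
  have i1' : IntervalIntegrable (fun θ : ℝ => ∑ t ∈ Finset.range D,
      (((⌊S t + θ⌋ : ℤ) : ℝ) - ((⌊F (t + 1) + θ⌋ : ℤ) : ℝ))) MeasureTheory.volume 0 1 := by
    have := IntervalIntegrable.sum (Finset.range D) i1
    have e : (∑ t ∈ Finset.range D,
        fun θ : ℝ => ((⌊S t + θ⌋ : ℤ) : ℝ) - ((⌊F (t + 1) + θ⌋ : ℤ) : ℝ))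
        = fun θ : ℝ => ∑ t ∈ Finset.range D,
          (((⌊S t + θ⌋ : ℤ) : ℝ) - ((⌊F (t + 1) + θ⌋ : ℤ) : ℝ)) := by
      funext θ
      rw [Finset.sum_apply]
    rw [← e]
    exact this
  have i2 : IntervalIntegrable (fun θ : ℝ => w * ((⌊S D + θ⌋ : ℤ) : ℝ))
      MeasureTheory.volume 0 1 := (floor_shift_int _).const_mul w
  have hGi : IntervalIntegrable G MeasureTheory.volume 0 1 := i1'.add i2
  have hGint : ∫ θ in (0 : ℝ)..1, G θ = ∑ t ∈ Finset.range D, (S t - F (t + 1)) + w * S D := by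
    simp only [hG]
    rw [intervalIntegral.integral_add i1' i2, intervalIntegral.integral_finsetSum i1,
      intervalIntegral.integral_const_mul, floor_shift_integral]
    congr 1
    apply Finset.sum_congr rfl
    intro t _
    rw [intervalIntegral.integral_sub (floor_shift_int _) (floor_shift_int _),
      floor_shift_integral, floor_shift_integral]
  have hIoo : MeasureTheory.IntegrableOn G (Set.Ioo 0 1) MeasureTheory.volume :=
    ((intervalIntegrable_iff_integrableOn_Ioc_of_le zero_le_one).mp hGi).mono_set
      Set.Ioo_subset_Ioc_self
  obtain ⟨θ, hθ, hle⟩ := MeasureTheory.exists_le_setAverage (μ := MeasureTheory.volume)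
    (s := Set.Ioo (0 : ℝ) 1) (by simp) (by simp) hIoo
  refine ⟨θ, hθ.1.le, hθ.2, ?_⟩
  rw [MeasureTheory.setAverage_eq, ← MeasureTheory.integral_Ioc_eq_integral_Ioo,
    ← intervalIntegral.integral_of_le zero_le_one, hGint] at hle
  change G θ ≤ _
  simpa using hle

/-- Total fractional weight of intervals started up to `t`. -/
noncomputable def SR (D : ℕ) (x : ℕ × ℕ → ℝ) (t : ℕ) : ℝ :=
  ∑ p ∈ Intervals D, if p.1 ≤ t then x p else 0

/-- Total fractional weight of intervals finished before `t`. -/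
noncomputable def FR (D : ℕ) (x : ℕ × ℕ → ℝ) (t : ℕ) : ℝ :=
  ∑ p ∈ Intervals D, if p.2 < t then x p else 0

theorem mem_intervals {D : ℕ} {p : ℕ × ℕ} (h : p ∈ Intervals D) : p.1 < p.2 ∧ p.2 ≤ D := by
  simp only [Intervals, Finset.mem_filter, Finset.mem_product, Finset.mem_range] at h
  exact ⟨h.2, by omega⟩

theorem sr_mono {D : ℕ} {x : ℕ × ℕ → ℝ} (hx : ∀ p ∈ Intervals D, 0 ≤ x p) :
    Monotone (SR D x) := by
  intro a b hab
  apply Finset.sum_le_sum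
  intro p hp
  have := hx p hp
  split_ifs <;> first | omega | linarith

theorem fr_mono {D : ℕ} {x : ℕ × ℕ → ℝ} (hx : ∀ p ∈ Intervals D, 0 ≤ x p) :
    Monotone (FR D x) := by
  intro a b hab
  apply Finset.sum_le_sum
  intro p hp
  have := hx p hp
  split_ifs <;> first | omega | linarith

theorem fr_zero (D : ℕ) (x : ℕ × ℕ → ℝ) : FR D x 0 = 0 := by
  simp [FR]

theorem sr_nonneg {D : ℕ} {x : ℕ × ℕ → ℝ} (hx : ∀ p ∈ Intervals D, 0 ≤ x p) (t : ℕ) :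
    0 ≤ SR D x t := by
  apply Finset.sum_nonneg
  intro p hp
  have := hx p hp
  split_ifs <;> linarith

theorem sr_fr (D : ℕ) (x : ℕ × ℕ → ℝ) (a b : ℕ) (hab : a ≤ b + 1) :
    ∑ p ∈ (Intervals D).filter (fun p => p.1 ≤ b ∧ a ≤ p.2), x p = SR D x b - FR D x a := by
  rw [Finset.sum_filter, SR, FR, ← Finset.sum_sub_distrib]
  apply Finset.sum_congr rfl
  intro p hp
  have := (mem_intervals hp).1
  split_ifs <;> first | omega | simp

theorem sr_D (D : ℕ) (x : ℕ × ℕ → ℝ) : SR D x D = ∑ p ∈ Intervals D, x p := by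
  apply Finset.sum_congr rfl
  intro p hp
  have := mem_intervals hp
  rw [if_pos (by omega)]

theorem lp_cost (D : ℕ) (x : ℕ × ℕ → ℝ) (q : ℝ) :
    ∑ p ∈ Intervals D, x p * (((p.2 : ℝ) - (p.1 : ℝ)) + q)
      = ∑ t ∈ Finset.range D, (SR D x t - FR D x (t + 1)) + q * SR D x D := by
  have h1 : ∑ t ∈ Finset.range D, (SR D x t - FR D x (t + 1))
      = ∑ p ∈ Intervals D, x p * ((p.2 : ℝ) - (p.1 : ℝ)) := by
    have : ∀ t ∈ Finset.range D, SR D x t - FR D x (t + 1)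
        = ∑ p ∈ Intervals D, if p.1 ≤ t ∧ t + 1 ≤ p.2 then x p else 0 := by
      intro t _
      rw [← sr_fr D x (t + 1) t le_rfl, Finset.sum_filter]
    rw [Finset.sum_congr rfl this, Finset.sum_comm]
    apply Finset.sum_congr rfl
    intro p hp
    have hm := mem_intervals hp
    rw [← Finset.sum_filter, Finset.sum_const, nsmul_eq_mul]
    have : (Finset.range D).filter (fun t => p.1 ≤ t ∧ t + 1 ≤ p.2) = Finset.Ico p.1 p.2 := by
      ext t
      simp only [Finset.mem_filter, Finset.mem_range, Finset.mem_Ico]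
      omega
    rw [this, Nat.card_Ico, Nat.cast_sub hm.1.le]
    ring
  rw [h1, sr_D, Finset.mul_sum, ← Finset.sum_add_distrib]
  apply Finset.sum_congr rfl
  intro p _
  ring


/-- integrality gap at most 2: for every feasible fractional LP solution
`(x, f)` there is a feasible `m`-machine solution of energy at most twice the LP cost. -/
theorem stmt13 {n : ℕ} (m D : ℕ) (jobs : Fin n → Job) (hval : ∀ i, (jobs i).Valid)
    (hspan : ∀ i, (jobs i).d ≤ D)
    (q : ℝ) (hq : 0 < q)
    (l : ℕ → ℕ → ℕ)
    (hl : ∀ a b : ℕ, a < b →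
      IsGreatest {ℓ : ℕ | BlackoutFeasible n m jobs a b ℓ} (l a b))
    (hfeas : ∃ (A : Fin m → Finset ℕ) (σ : Fin m → ℕ → Option (Fin n)),
      MFeasible jobs A σ)
    (x : ℕ × ℕ → ℝ) (f : Fin n → ℕ → ℝ)
    (hx : ∀ p ∈ Intervals D, 0 ≤ x p ∧ x p ≤ (m : ℝ))
    (hf : ∀ (i : Fin n) (t : ℕ), 0 ≤ f i t ∧ f i t ≤ 1)
    (hcap : ∀ t : ℕ, t < D →
      (∑ p ∈ (Intervals D).filter (fun p => p.1 ≤ t ∧ t + 1 ≤ p.2), x p) ≤ (m : ℝ))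
    (hdem : ∀ t : ℕ, t < D →
      (∑ i ∈ Finset.univ.filter (fun i : Fin n =>
          (jobs i).r ≤ t ∧ t + 1 ≤ (jobs i).d), f i t) ≤
        ∑ p ∈ (Intervals D).filter (fun p => p.1 ≤ t ∧ t + 1 ≤ p.2), x p)
    (hvol : ∀ i : Fin n,
      (∑ t ∈ Finset.Ico (jobs i).r (jobs i).d, f i t) = ((jobs i).p : ℝ))
    (hskel : ∀ a b : ℕ, a < b → b ≤ D →
      ((m : ℝ) - (l a b : ℝ)) ≤
        ∑ p ∈ (Intervals D).filter (fun p => p.1 ≤ b ∧ a ≤ p.2), x p) :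
    ∃ (A : Fin m → Finset ℕ) (σ : Fin m → ℕ → Option (Fin n)), MFeasible jobs A σ ∧
      energy q A ≤ 2 * ∑ p ∈ Intervals D, x p * (((p.2 : ℝ) - (p.1 : ℝ)) + q) := by
  have hx0 : ∀ p ∈ Intervals D, 0 ≤ x p := fun p hp => (hx p hp).1
  have hmt : ∀ t, ∑ p ∈ (Intervals D).filter (fun p => p.1 ≤ t ∧ t + 1 ≤ p.2), x p
      = SR D x t - FR D x (t + 1) := fun t => sr_fr D x (t + 1) t le_rfl
  obtain ⟨θ, hθ0, hθ1, hθ⟩ := exists_theta D (SR D x) (FR D x) (2 * q)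
  set S : ℕ → ℤ := fun t => ⌊SR D x t + θ⌋ with hSdef
  set F : ℕ → ℤ := fun t => ⌊FR D x t + θ⌋ with hFdef
  have hS : Monotone S := fun a b hab => Int.floor_mono (by linarith [sr_mono hx0 hab])
  have hF : Monotone F := fun a b hab => Int.floor_mono (by linarith [fr_mono hx0 hab])
  have hS0 : 0 ≤ S 0 := Int.floor_nonneg.mpr (by linarith [sr_nonneg hx0 0])
  have hF0 : F 0 = 0 := by
    simp only [hFdef, fr_zero, zero_add]
    exact Int.floor_eq_zero_iff.mpr ⟨hθ0, hθ1⟩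
  have hfs : ∀ t, FR D x (t + 1) ≤ SR D x t := by
    intro t
    have h1 := hmt t
    have h2 : 0 ≤ ∑ p ∈ (Intervals D).filter (fun p => p.1 ≤ t ∧ t + 1 ≤ p.2), x p :=
      Finset.sum_nonneg (fun p hp => hx0 p (Finset.mem_of_mem_filter p hp))
    linarith
  have hFS1 : ∀ t, F (t + 1) ≤ S t := fun t => Int.floor_mono (by linarith [hfs t])
  have hFS : F D ≤ S D := (hF (Nat.le_succ D)).trans (hFS1 D)
  -- shifting a floor by a natural number
  have hshift : ∀ (a b : ℝ) (k : ℤ), a + k ≤ b → ⌊a + θ⌋ + k ≤ ⌊b + θ⌋ := by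
    intro a b k h
    rw [← Int.floor_add_intCast]
    exact Int.floor_mono (by linarith)
  have hcm : ∀ t < D, S t - F (t + 1) ≤ m := by
    intro t ht
    have h1 := hcap t ht
    rw [hmt] at h1
    have h2 := hshift (SR D x t) (FR D x (t + 1) + m) (-(m : ℤ)) (by push_cast; linarith)
    have h3 : ⌊FR D x (t + 1) + m + θ⌋ = F (t + 1) + m := by
      rw [show FR D x (t + 1) + (m : ℝ) + θ = FR D x (t + 1) + θ + (m : ℝ) by ring,
        Int.floor_add_natCast]
    have h4 : S t ≤ F (t + 1) + m := by
      rw [← h3]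
      exact Int.floor_mono (by linarith)
    omega
  have HK : ∀ a b, a < b → b ≤ D → ∃ y, Sch (fun i => (jobs i).r) (fun i => (jobs i).d)
      (fun i => (jobs i).p) y ∧ ∀ t, a ≤ t → t < b → (ld y t : ℤ) ≤ S b - F a := by
    intro a b hab hbD
    obtain ⟨⟨hlm, A, σ, hAσ, hact⟩, _⟩ := hl a b hab
    obtain ⟨y, hy, hyl⟩ := sch_of_mfeasible jobs A σ hAσ
    refine ⟨y, hy, fun t h1 h2 => ?_⟩
    have h3 := hyl t
    have h4 := hact t h1 h2
    have h5 := hskel a b hab hbD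
    rw [sr_fr D x a b (by omega)] at h5
    have h6 := hshift (FR D x a) (SR D x b) ((m : ℤ) - (l a b : ℤ)) (by push_cast; linarith)
    change F a + _ ≤ S b at h6
    omega
  obtain ⟨X, hXD, hXm, hXI, y, hy, hyX, hyl⟩ := core (r := fun i => (jobs i).r)
    (d := fun i => (jobs i).d) (p := fun i => (jobs i).p) m D S F hS hF
    (fun t _ => by have := hFS1 t; omega) hcm hspan HK
    (by
      obtain ⟨A, σ, h⟩ := hfeas
      obtain ⟨y, hy, _⟩ := sch_of_mfeasible jobs A σ h
      exact ⟨y, hy⟩)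
    f hf hvol (fun t => SR D x t - FR D x (t + 1))
    (fun t ht => by have h := hdem t ht; rw [hmt] at h; exact h)
    (fun t ht => by have h := hcap t ht; rw [hmt] at h; exact h)
    (by
      intro t _
      have h1 := Int.lt_floor_add_one (SR D x t + θ)
      have h2 := Int.floor_le (FR D x (t + 1) + θ)
      simp only [hSdef, hFdef]
      push_cast
      linarith)
  set c : ℕ → ℤ := fun t => S t - F (t + 1) + (if t ∈ X then 1 else 0) with hc
  have hV := vbound D S F hS hF hS0 hF0 hFS X hXD hXI c (fun t => rfl)
  obtain ⟨A, σ, hAσ, hcard, hruns⟩ := machines (m := m) jobs hspan y hy c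
    (by
      intro t _
      have := hFS1 t
      simp only [hc]
      split_ifs <;> omega)
    (by
      intro t ht
      have := hcm t ht
      simp only [hc]
      split_ifs with h
      · have := hXm t h
        omega
      · omega)
    hyl
  refine ⟨A, σ, hAσ, ?_⟩
  -- size of `X`
  have hXcard : (X.card : ℝ) ≤ ∑ t ∈ Finset.range D, (SR D x t - FR D x (t + 1)) := by
    have h1 := closed_ineq hy (Finset.range D)
      (fun i t z _ _ _ h _ => Finset.mem_range.mpr (lt_of_lt_of_le h (hspan i))) f hf hvol
    have h2 : ∑ t ∈ Finset.range D, ∑ i ∈ Finset.univ.filter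
        (fun i : Fin n => (jobs i).r ≤ t ∧ t + 1 ≤ (jobs i).d), f i t
        ≤ ∑ t ∈ Finset.range D, (SR D x t - FR D x (t + 1)) := by
      apply Finset.sum_le_sum
      intro t ht
      have h := hdem t (Finset.mem_range.mp ht)
      rw [hmt] at h
      exact h
    have h3 : (X.card : ℝ) ≤ ∑ t ∈ X, (ld y t : ℝ) := by
      rw [Finset.card_eq_sum_ones]
      push_cast
      apply Finset.sum_le_sum
      intro t ht
      exact_mod_cast hyX t ht
    have h4 : ∑ t ∈ X, (ld y t : ℝ) ≤ ∑ t ∈ Finset.range D, (ld y t : ℝ) := by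
      apply Finset.sum_le_sum_of_subset_of_nonneg
      · intro t ht
        exact Finset.mem_range.mpr (hXD t ht)
      · intro t _ _
        positivity
    linarith
  have hcsum : ∑ t ∈ Finset.range D, c t
      = ∑ t ∈ Finset.range D, (S t - F (t + 1)) + (X.card : ℤ) := by
    simp only [hc]
    rw [Finset.sum_add_distrib, ← Finset.sum_filter]
    have : (Finset.range D).filter (fun t => t ∈ X) = X := by
      ext t
      simp only [Finset.mem_filter, Finset.mem_range]
      exact ⟨fun h => h.2, fun h => ⟨hXD t h, h⟩⟩
    rw [this]
    simp
  rw [hcsum] at hcard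
  have hcard' : ∑ k, ((A k).card : ℝ)
      ≤ ∑ t ∈ Finset.range D, ((S t : ℝ) - (F (t + 1) : ℝ)) + (X.card : ℝ) := by
    exact_mod_cast hcard
  have hruns' : ∑ k, (runs (A k) : ℝ) ≤ 2 * (S D : ℝ) := by
    exact_mod_cast hruns.trans hV
  have hen : energy q A = ∑ k, ((A k).card : ℝ) + q * ∑ k, (runs (A k) : ℝ) := by
    simp only [energy, cost]
    rw [Finset.sum_add_distrib, Finset.mul_sum]
  rw [hen, lp_cost]
  have h9 := mul_le_mul_of_nonneg_left hruns' hq.le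
  linarith
end
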